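/- arXiv:1811.03769 — 12 statements merged into one kernel-verified Lean document; each statement's English description precedes it below -/
import Mathlib

section
/- Let d ∈ ℕ and β > 0. Let (Σ_j) be a sequence of nonempty closed subsets of the closed ball B(0,10) ⊆ ℝ^{d+1} converging in the Hausdorff metric to a nonempty compact set Σ. Suppose that for every j, every x ∈ Σ_j ∩ B(0,2) and every 0 < r < 2 one has bβ_{Σ_j}(x,r) ≥ β. Then for every x ∈ Σ ∩ B(0,1) and every 0 < r < 1 one has bβ_Σ(x,r) ≥ β. -/
open MeasureTheory Metric Filter
open scoped ENNReal NNReal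

noncomputable section

/-- `bbeta d E x r` is the quantity `bβ_E(x,r)`: the infimum over all `d`-dimensional
affine planes `V ⊆ ℝ^{d+1}` of
`sup_{y ∈ E ∩ B(x,r)} dist(y,V)/r + sup_{y ∈ V ∩ B(x,r)} dist(y,E)/r`,
where suprema over empty sets are `0` (which is `Real.sSup`'s junk value). -/
def bbeta (d : ℕ) (E : Set (EuclideanSpace ℝ (Fin (d+1))))
    (x : EuclideanSpace ℝ (Fin (d+1))) (r : ℝ) : ℝ :=
  sInf { t : ℝ | ∃ V : AffineSubspace ℝ (EuclideanSpace ℝ (Fin (d+1))),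
    (V : Set (EuclideanSpace ℝ (Fin (d+1)))).Nonempty ∧
    Module.finrank ℝ V.direction = d ∧
    t = sSup ((fun y => infDist y (V : Set (EuclideanSpace ℝ (Fin (d+1))))) ''
          (E ∩ closedBall x r)) / r
      + sSup ((fun y => infDist y E) ''
          ((V : Set (EuclideanSpace ℝ (Fin (d+1)))) ∩ closedBall x r)) / r }

/-- `FDist μ ν B = sup_f |∫ f dμ − ∫ f dν|`, the supremum over all nonnegative
1-Lipschitz functions `f` supported in `B`. -/
def FDist {n : ℕ} (μ ν : Measure (EuclideanSpace ℝ (Fin n)))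
    (B : Set (EuclideanSpace ℝ (Fin n))) : ℝ :=
  sSup { t : ℝ | ∃ f : EuclideanSpace ℝ (Fin n) → ℝ,
    LipschitzWith 1 f ∧ (∀ x, 0 ≤ f x) ∧ Function.support f ⊆ B ∧
    t = |(∫ x, f x ∂μ) - ∫ x, f x ∂ν| }

/-- `alphaV d μ x r V = r^{-d-1} · inf_{c>0} F_{B(x,r)}(μ, c·H^d|_V)`. -/
def alphaV (d : ℕ) {n : ℕ} (μ : Measure (EuclideanSpace ℝ (Fin n)))
    (x : EuclideanSpace ℝ (Fin n)) (r : ℝ)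
    (V : AffineSubspace ℝ (EuclideanSpace ℝ (Fin n))) : ℝ :=
  r ^ (-(d : ℝ) - 1) *
    sInf { t : ℝ | ∃ c : ℝ, 0 < c ∧
      t = FDist μ (ENNReal.ofReal c •
            (μH[(d : ℝ)]).restrict (V : Set (EuclideanSpace ℝ (Fin n))))
          (closedBall x r) }

/-- `alphaA d μ x r = inf_V alphaV d μ x r V` over all `d`-dimensional affine planes `V`. -/
def alphaA (d : ℕ) {n : ℕ} (μ : Measure (EuclideanSpace ℝ (Fin n)))
    (x : EuclideanSpace ℝ (Fin n)) (r : ℝ) : ℝ :=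
  sInf { t : ℝ | ∃ V : AffineSubspace ℝ (EuclideanSpace ℝ (Fin n)),
    (V : Set (EuclideanSpace ℝ (Fin n))).Nonempty ∧
    Module.finrank ℝ V.direction = d ∧ t = alphaV d μ x r V }

/-- `E` is Ahlfors `s`-regular with constant `C₁`:
`C₁⁻¹ r^s ≤ H^s(E ∩ B(x,r)) ≤ C₁ r^s` for all `x ∈ E` and `0 < r < diam E`. -/
def AhlforsRegular {n : ℕ} (s C₁ : ℝ) (E : Set (EuclideanSpace ℝ (Fin n))) : Prop :=
  ∀ x ∈ E, ∀ r : ℝ, 0 < r → ENNReal.ofReal r < EMetric.diam E →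
    ENNReal.ofReal (C₁⁻¹ * r ^ s) ≤ μH[s] (E ∩ closedBall x r) ∧
    μH[s] (E ∩ closedBall x r) ≤ ENNReal.ofReal (C₁ * r ^ s)

/-- The `t`-dimensional Hausdorff content `H^t_∞(A)`: the infimum of `∑ (diam U_i)^t`
over countable covers of `A` by arbitrary sets. -/
def hContent {n : ℕ} (t : ℝ) (A : Set (EuclideanSpace ℝ (Fin n))) : ℝ≥0∞ :=
  ⨅ (U : ℕ → Set (EuclideanSpace ℝ (Fin n))) (_ : A ⊆ ⋃ i, U i),
    ∑' i, EMetric.diam (U i) ^ t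

/-- `F ⊆ ℝ^n` is `d`-rectifiable: `H^d(F) < ∞` and `F` can be covered, up to an
`H^d`-null set, by countably many Lipschitz images of `ℝ^d`. -/
def DRectifiable (d : ℕ) {n : ℕ} (F : Set (EuclideanSpace ℝ (Fin n))) : Prop :=
  μH[(d : ℝ)] F < ⊤ ∧
  ∃ f : ℕ → (EuclideanSpace ℝ (Fin d) → EuclideanSpace ℝ (Fin n)),
    (∀ i, ∃ K : ℝ≥0, LipschitzWith K (f i)) ∧
    μH[(d : ℝ)] (F \ ⋃ i, Set.range (f i)) = 0

end

open MeasureTheory Metric Filter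
open scoped ENNReal


lemma bdd_img {X : Type*} [MetricSpace X] [ProperSpace X] (A B : Set X) (x : X) (r : ℝ) :
    BddAbove ((fun y => infDist y A) '' (B ∩ closedBall x r)) :=
  (((isCompact_closedBall x r).image (continuous_infDist_pt A)).bddAbove).mono
    (Set.image_mono Set.inter_subset_right)

lemma sSup_img_nonneg {X : Type*} [MetricSpace X] (A C : Set X) :
    0 ≤ sSup ((fun y => infDist y A) '' C) := by
  apply Real.sSup_nonneg
  rintro _ ⟨y, -, rfl⟩
  exact infDist_nonneg

lemma step (d : ℕ) (β ε r : ℝ) (E S : Set (EuclideanSpace ℝ (Fin (d+1))))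
    (x z : EuclideanSpace ℝ (Fin (d+1)))
    (hfin : hausdorffEDist E S ≠ ⊤) (hS : S.Nonempty) (hd : hausdorffDist E S < ε)
    (hε : 0 < ε) (hr : 0 < r - 2 * ε) (hxz : dist x z < ε)
    (hβ : β ≤ bbeta d E z (r - 2 * ε))
    (V : AffineSubspace ℝ (EuclideanSpace ℝ (Fin (d+1))))
    (hV : (V : Set (EuclideanSpace ℝ (Fin (d+1)))).Nonempty)
    (hVd : Module.finrank ℝ V.direction = d) :
    β * (r - 2 * ε) ≤ sSup ((fun y => infDist y (V : Set (EuclideanSpace ℝ (Fin (d+1))))) ''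
          (S ∩ closedBall x r))
      + sSup ((fun y => infDist y S) ''
          ((V : Set (EuclideanSpace ℝ (Fin (d+1)))) ∩ closedBall x r)) + 2 * ε := by
  have h1 : bbeta d E z (r - 2 * ε) ≤ _ := csInf_le ⟨0, by
    rintro t ⟨W, -, -, rfl⟩
    exact add_nonneg (div_nonneg (sSup_img_nonneg _ _) hr.le)
      (div_nonneg (sSup_img_nonneg _ _) hr.le)⟩ ⟨V, hV, hVd, rfl⟩
  have h2 := hβ.trans h1
  rw [← add_div, le_div_iff₀ hr] at h2
  refine h2.trans ?_
  have hA : sSup ((fun y => infDist y (V : Set (EuclideanSpace ℝ (Fin (d+1))))) ''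
          (E ∩ closedBall z (r - 2 * ε))) ≤
      sSup ((fun y => infDist y (V : Set (EuclideanSpace ℝ (Fin (d+1))))) ''
          (S ∩ closedBall x r)) + ε := by
    apply Real.sSup_le
    · rintro _ ⟨y, ⟨hyE, hyz⟩, rfl⟩
      obtain ⟨y', hy', hyy⟩ := exists_dist_lt_of_hausdorffDist_lt hyE hd hfin
      have hyx : y' ∈ closedBall x r := by
        rw [mem_closedBall] at hyz ⊢
        have a := dist_triangle y' y x
        have b := dist_triangle y z x
        rw [dist_comm y' y] at a
        rw [dist_comm z x] at b
        linarith
      have := le_csSup (bdd_img (V : Set (EuclideanSpace ℝ (Fin (d+1)))) S x r)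
        ⟨y', ⟨hy', hyx⟩, rfl⟩
      have h3 := infDist_le_infDist_add_dist (s := (V : Set (EuclideanSpace ℝ (Fin (d+1)))))
        (x := y) (y := y')
      simp only at this ⊢
      linarith
    · have := sSup_img_nonneg (V : Set (EuclideanSpace ℝ (Fin (d+1)))) (S ∩ closedBall x r)
      linarith
  have hB : sSup ((fun y => infDist y E) ''
          ((V : Set (EuclideanSpace ℝ (Fin (d+1)))) ∩ closedBall z (r - 2 * ε))) ≤
      sSup ((fun y => infDist y S) ''
          ((V : Set (EuclideanSpace ℝ (Fin (d+1)))) ∩ closedBall x r)) + ε := by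
    apply Real.sSup_le
    · rintro _ ⟨y, ⟨hyE, hyz⟩, rfl⟩
      have hyx : y ∈ closedBall x r := by
        rw [mem_closedBall] at hyz ⊢
        have b := dist_triangle y z x
        rw [dist_comm z x] at b
        linarith
      have := le_csSup (bdd_img S (V : Set (EuclideanSpace ℝ (Fin (d+1)))) x r)
        ⟨y, ⟨hyE, hyx⟩, rfl⟩
      have hfin' : hausdorffEDist S E ≠ ⊤ := by rwa [hausdorffEDist_comm]
      have h3 := infDist_le_infDist_add_hausdorffDist (x := y) hfin'
      rw [hausdorffDist_comm] at h3
      simp only at this ⊢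
      linarith
    · have := sSup_img_nonneg S ((V : Set (EuclideanSpace ℝ (Fin (d+1)))) ∩ closedBall x r)
      linarith
  linarith

/-- stability of the uniform non-flatness condition `bβ ≥ β` under
Hausdorff convergence of closed subsets of `B(0,10) ⊆ ℝ^{d+1}`. -/
theorem stmt0 (d : ℕ) (β : ℝ) (hβ : 0 < β)
    (Sj : ℕ → Set (EuclideanSpace ℝ (Fin (d+1))))
    (S : Set (EuclideanSpace ℝ (Fin (d+1))))
    (hne : ∀ j, (Sj j).Nonempty) (hcl : ∀ j, IsClosed (Sj j))
    (hsub : ∀ j, Sj j ⊆ closedBall 0 10)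
    (hSne : S.Nonempty) (hScomp : IsCompact S)
    (hconv : Tendsto (fun j => hausdorffDist (Sj j) S) atTop (nhds 0))
    (hβj : ∀ j, ∀ x ∈ Sj j ∩ closedBall 0 2, ∀ r : ℝ, 0 < r → r < 2 →
      β ≤ bbeta d (Sj j) x r) :
    ∀ x ∈ S ∩ closedBall 0 1, ∀ r : ℝ, 0 < r → r < 1 → β ≤ bbeta d S x r := by
  rintro x ⟨hxS, hx1⟩ r hr0 hr1
  have hfin : ∀ j, hausdorffEDist (Sj j) S ≠ ⊤ := fun j =>
    hausdorffEDist_ne_top_of_nonempty_of_bounded (hne j) hSne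
      (isBounded_closedBall.subset (hsub j)) hScomp.isBounded
  have key : ∀ ε : ℝ, 0 < ε → ε < 1 → ∃ j, hausdorffDist (Sj j) S < ε ∧
      ∃ z ∈ Sj j ∩ closedBall 0 2, dist x z < ε := by
    intro ε h0 h1
    obtain ⟨j, hj⟩ := (hconv.eventually (gt_mem_nhds h0)).exists
    obtain ⟨z, hz, hzx⟩ := exists_dist_lt_of_hausdorffDist_lt' hxS hj (hfin j)
    refine ⟨j, hj, z, ⟨hz, ?_⟩, by rwa [dist_comm]⟩
    rw [mem_closedBall] at hx1 ⊢
    have := dist_triangle z x 0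
    linarith
  unfold bbeta
  apply le_csInf
  · by_contra hemp
    obtain ⟨j, -, z, hz, -⟩ := key (1 / 2) (by norm_num) (by norm_num)
    have h := hβj j z hz 1 (by norm_num) (by norm_num)
    unfold bbeta at h
    have hz0 : ∀ A : Set ℝ, A = ∅ → sInf A = 0 := by rintro A rfl; exact Real.sInf_empty
    rw [hz0 _ ?_] at h
    · linarith
    · rw [Set.eq_empty_iff_forall_notMem]
      rintro t ⟨V, h1, h2, -⟩
      exact hemp ⟨_, V, h1, h2, rfl⟩
  · rintro t ⟨V, hV, hVd, rfl⟩
    rw [← add_div, le_div_iff₀ hr0]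
    apply le_of_forall_pos_le_add
    intro δ hδ
    obtain ⟨ε, hε0, hε⟩ := exists_between
      (show (0 : ℝ) < min (r / 2) (δ / (2 * β + 2)) by positivity)
    obtain ⟨hε1, hε2⟩ := lt_min_iff.1 hε
    rw [lt_div_iff₀ (by positivity)] at hε2
    obtain ⟨j, hj, z, hz, hxz⟩ := key ε hε0 (by linarith)
    have := step d β ε r (Sj j) S x z (hfin j) hSne hj hε0 (by linarith) hxz
      (hβj j z hz _ (by linarith) (by linarith)) V hV hVd
    linarith
end

section
/- Let d ∈ ℕ, C₁ ≥ 1 and β > 0. There exists ε > 0, depending only on d, C₁ and β, such that the following holds: if Σ ⊆ ℝ^{d+1} is a closed set which is Ahlfors d-regular with constant C₁, x ∈ Σ, 0 < r < (diam Σ)/100, and bβ_Σ(x,r) ≥ β, then α_{H^d|_Σ}(x,4r) ≥ ε. -/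
open MeasureTheory Metric Filter
open scoped ENNReal NNReal

open MeasureTheory Metric Filter
open scoped ENNReal

lemma ball_plane (d : ℕ) : ∃ w : ℝ, 0 < w ∧
    ∀ V : AffineSubspace ℝ (EuclideanSpace ℝ (Fin (d+1))),
      Module.finrank ℝ V.direction = d → ∀ y ∈ V, ∀ ρ : ℝ, 0 ≤ ρ →
        μH[(d : ℝ)] ((V : Set (EuclideanSpace ℝ (Fin (d+1)))) ∩ closedBall y ρ)
          = ENNReal.ofReal (w * ρ ^ d) := by
  set m : Measure (EuclideanSpace ℝ (Fin d)) := μH[(d : ℝ)] with hm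
  have hfr : Module.finrank ℝ (EuclideanSpace ℝ (Fin d)) = d := by simp
  have hH : m.IsAddHaarMeasure := by
    have := isAddHaarMeasure_hausdorffMeasure (E := EuclideanSpace ℝ (Fin d))
    rw [hfr] at this
    exact this
  refine ⟨(m (ball 0 1)).toReal, ENNReal.toReal_pos (measure_ball_pos m 0 one_pos).ne'
    measure_ball_lt_top.ne, ?_⟩
  intro V hV y hy ρ hρ
  have e : EuclideanSpace ℝ (Fin d) ≃ₗᵢ[ℝ] V.direction :=
    ((stdOrthonormalBasis ℝ V.direction).reindex (finCongr hV)).repr.symm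
  let φ : EuclideanSpace ℝ (Fin d) → EuclideanSpace ℝ (Fin (d+1)) :=
    fun u => (e u : EuclideanSpace ℝ (Fin (d+1))) + y
  have hφ : Isometry φ := by
    apply Isometry.of_dist_eq
    intro a b
    simp only [φ, dist_add_right]
    rw [← Subtype.dist_eq, e.dist_map]
  have him : φ '' closedBall 0 ρ = (V : Set (EuclideanSpace ℝ (Fin (d+1)))) ∩ closedBall y ρ := by
    ext z
    constructor
    · rintro ⟨u, hu, rfl⟩
      refine ⟨AffineSubspace.vadd_mem_of_mem_direction (e u).2 hy, ?_⟩
      have h1 : ‖((e u : V.direction) : EuclideanSpace ℝ (Fin (d+1)))‖ = ‖u‖ := e.norm_map u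
      rw [mem_closedBall, dist_zero_right] at hu
      simpa [φ, mem_closedBall, dist_eq_norm, h1] using hu
    · rintro ⟨hz, hz'⟩
      refine ⟨e.symm ⟨z - y, AffineSubspace.vsub_mem_direction hz hy⟩, ?_, ?_⟩
      · simpa [mem_closedBall, dist_eq_norm] using hz'
      · simp [φ]
  rw [← him, hφ.hausdorffMeasure_image (Or.inl (by positivity)), ← hm,
    Measure.addHaar_closedBall m 0 hρ, hfr, mul_comm, ENNReal.ofReal_mul ENNReal.toReal_nonneg,
    ENNReal.ofReal_toReal measure_ball_lt_top.ne]

lemma integral_le_ball {n : ℕ} (ν : Measure (EuclideanSpace ℝ (Fin n)))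
    (y : EuclideanSpace ℝ (Fin n)) (ρ M : ℝ) (hν : ν (closedBall y ρ) < ⊤)
    (f : EuclideanSpace ℝ (Fin n) → ℝ) (h0 : ∀ z, 0 ≤ f z) (hM : ∀ z, f z ≤ M)
    (hs : Function.support f ⊆ closedBall y ρ) :
    ∫ z, f z ∂ν ≤ M * (ν (closedBall y ρ)).toReal := by
  rw [← setIntegral_eq_integral_of_forall_compl_eq_zero (s := closedBall y ρ)
    (fun z hz => by by_contra h; exact hz (hs h))]
  refine (Real.le_norm_self _).trans ?_
  exact norm_setIntegral_le_of_norm_le_const hν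
    (fun z _ => by rw [Real.norm_of_nonneg (h0 z)]; exact hM z)

lemma le_FDist (d : ℕ) (μ ν : Measure (EuclideanSpace ℝ (Fin (d+1))))
    (x : EuclideanSpace ℝ (Fin (d+1))) (R : ℝ) (hR : 0 < R)
    (hμ : μ (closedBall x R) < ⊤) (hν : ν (closedBall x R) < ⊤)
    (f : EuclideanSpace ℝ (Fin (d+1)) → ℝ) (hf : LipschitzWith 1 f) (h0 : ∀ z, 0 ≤ f z)
    (hs : Function.support f ⊆ closedBall x R) :
    |(∫ z, f z ∂μ) - ∫ z, f z ∂ν| ≤ FDist μ ν (closedBall x R) := by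
  refine le_csSup ?_ ⟨f, hf, h0, hs, rfl⟩
  refine ⟨(3 * R) * (μ (closedBall x R)).toReal + (3 * R) * (ν (closedBall x R)).toReal, ?_⟩
  rintro t ⟨g, hg, g0, gs, rfl⟩
  have gM : ∀ z, g z ≤ 3 * R := by
    intro z
    by_cases hz : z ∈ closedBall x R
    · obtain ⟨p, hp⟩ := exists_norm_eq (EuclideanSpace ℝ (Fin (d+1)))
        (c := 2 * R) (by positivity)
      have hgp : g (x + p) = 0 := by
        by_contra h
        have := gs h
        simp [mem_closedBall, hp] at this
        linarith
      have h1 := hg.dist_le_mul z (x + p)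
      rw [hgp, Real.dist_eq, sub_zero, abs_of_nonneg (g0 z)] at h1
      have h2 := dist_triangle z x (x + p)
      have h3 : dist x (x + p) = 2 * R := by simp [hp]
      have h4 : dist z x ≤ R := hz
      simp at h1
      linarith
    · have : g z = 0 := by by_contra h; exact hz (gs h)
      rw [this]; positivity
  have a1 := integral_le_ball μ x R _ hμ g g0 gM gs
  have a2 := integral_le_ball ν x R _ hν g g0 gM gs
  have b1 : 0 ≤ ∫ z, g z ∂μ := integral_nonneg g0
  have b2 : 0 ≤ ∫ z, g z ∂ν := integral_nonneg g0
  rw [abs_le]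
  constructor <;> linarith

lemma tent_lip {n : ℕ} (y : EuclideanSpace ℝ (Fin n)) (ρ : ℝ) :
    LipschitzWith 1 (fun z => max 0 (ρ - dist z y)) := by
  apply LipschitzWith.of_le_add
  intro a b
  have := dist_triangle b a y
  rw [dist_comm b a] at this
  have h1 := le_max_left 0 (ρ - dist b y)
  have h2 := le_max_right 0 (ρ - dist b y)
  apply max_le
  · have := dist_nonneg (x := a) (y := b)
    linarith
  · linarith

lemma tent_supp {n : ℕ} (y : EuclideanSpace ℝ (Fin n)) (ρ : ℝ) :
    Function.support (fun z => max 0 (ρ - dist z y)) ⊆ closedBall y ρ := by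
  intro z hz
  by_contra h
  apply hz
  simp only [mem_closedBall, not_le] at h
  exact max_eq_left (by linarith)

lemma tent_lower {n : ℕ} (ν : Measure (EuclideanSpace ℝ (Fin n)))
    (y : EuclideanSpace ℝ (Fin n)) (ρ : ℝ) (hρ : 0 < ρ) (hν : ν (closedBall y ρ) < ⊤) :
    (ρ / 2) * (ν (closedBall y (ρ / 2))).toReal ≤ ∫ z, max 0 (ρ - dist z y) ∂ν := by
  have hint : Integrable (fun z => max 0 (ρ - dist z y)) ν := by
    rw [← integrableOn_iff_integrable_of_support_subset (tent_supp y ρ)]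
    refine Measure.integrableOn_of_bounded (M := ρ) hν.ne
      (tent_lip y ρ).continuous.aestronglyMeasurable ?_
    refine Filter.Eventually.of_forall (fun z => ?_)
    rw [Real.norm_of_nonneg (le_max_left _ _)]
    have := dist_nonneg (x := z) (y := y)
    exact max_le hρ.le (by linarith)
  have hlt : ν (closedBall y (ρ / 2)) < ⊤ :=
    (measure_mono (closedBall_subset_closedBall (by linarith))).trans_lt hν
  calc (ρ / 2) * (ν (closedBall y (ρ / 2))).toReal
      = ∫ z in closedBall y (ρ / 2), (ρ / 2) ∂ν := by
        rw [setIntegral_const, smul_eq_mul, mul_comm]; rfl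
    _ ≤ ∫ z in closedBall y (ρ / 2), max 0 (ρ - dist z y) ∂ν := by
        refine setIntegral_mono_on (integrableOn_const hlt.ne) hint.integrableOn
          measurableSet_closedBall ?_
        intro z hz
        have : dist z y ≤ ρ / 2 := hz
        exact le_max_of_le_right (by linarith)
    _ ≤ _ := setIntegral_le_integral hint (Filter.Eventually.of_forall fun z => le_max_left _ _)

lemma tent_zero {n : ℕ} (ν : Measure (EuclideanSpace ℝ (Fin n)))
    (A : Set (EuclideanSpace ℝ (Fin n))) (hA : MeasurableSet A)
    (y : EuclideanSpace ℝ (Fin n)) (ρ : ℝ) (h : ρ < infDist y A) :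
    ∫ z, max 0 (ρ - dist z y) ∂(ν.restrict A) = 0 := by
  rw [setIntegral_congr_fun (g := fun _ => (0 : ℝ)) hA]
  · simp
  · intro z hz
    have := infDist_le_dist_of_mem (x := y) hz
    rw [dist_comm] at this
    exact max_eq_left (by linarith)

lemma key (d : ℕ) (C₁ w δ : ℝ) (hC₁ : 1 ≤ C₁) (hw : 0 < w) (hδ : 0 < δ) (hδ1 : δ ≤ 1)
    (hball : ∀ V : AffineSubspace ℝ (EuclideanSpace ℝ (Fin (d+1))),
      Module.finrank ℝ V.direction = d → ∀ y ∈ V, ∀ ρ : ℝ, 0 ≤ ρ →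
        μH[(d : ℝ)] ((V : Set (EuclideanSpace ℝ (Fin (d+1)))) ∩ closedBall y ρ)
          = ENNReal.ofReal (w * ρ ^ d))
    (S : Set (EuclideanSpace ℝ (Fin (d+1)))) (hS : IsClosed S)
    (hreg : AhlforsRegular (d : ℝ) C₁ S) (x : EuclideanSpace ℝ (Fin (d+1))) (hx : x ∈ S)
    (r : ℝ) (hr : 0 < r) (hdiam : ENNReal.ofReal (100 * r) < EMetric.diam S)
    (V : AffineSubspace ℝ (EuclideanSpace ℝ (Fin (d+1))))
    (hVd : Module.finrank ℝ V.direction = d) (c : ℝ) (hc : 0 < c)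
    (hF : FDist ((μH[(d : ℝ)]).restrict S) (ENNReal.ofReal c •
            (μH[(d : ℝ)]).restrict (V : Set (EuclideanSpace ℝ (Fin (d+1)))))
          (closedBall x (4 * r)) < C₁⁻¹ * (4 ^ (d + 1))⁻¹ * (δ / 2) ^ (d + 1) * r ^ (d + 1)) :
    (∀ y ∈ S ∩ closedBall x r, infDist y (V : Set (EuclideanSpace ℝ (Fin (d+1)))) ≤ δ * r) ∧
    (∀ y ∈ (V : Set (EuclideanSpace ℝ (Fin (d+1)))) ∩ closedBall x r, infDist y S ≤ δ * r) := by
  have hC0 : 0 < C₁ := by linarith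
  have hVm : MeasurableSet (V : Set (EuclideanSpace ℝ (Fin (d+1)))) :=
    (AffineSubspace.closed_of_finiteDimensional V).measurableSet
  set μ := (μH[(d : ℝ)]).restrict S with hμdef
  set ν := ENNReal.ofReal c •
    (μH[(d : ℝ)]).restrict (V : Set (EuclideanSpace ℝ (Fin (d+1)))) with hνdef
  have hμb : ∀ y ρ, μ (closedBall y ρ) = μH[(d : ℝ)] (S ∩ closedBall y ρ) := by
    intro y ρ
    rw [hμdef, Measure.restrict_apply measurableSet_closedBall, Set.inter_comm]
  have hνb : ∀ y ρ, ν (closedBall y ρ) = ENNReal.ofReal c * μH[(d : ℝ)]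
      ((V : Set (EuclideanSpace ℝ (Fin (d+1)))) ∩ closedBall y ρ) := by
    intro y ρ
    rw [hνdef, Measure.smul_apply, Measure.restrict_apply measurableSet_closedBall,
      Set.inter_comm, smul_eq_mul]
  have hrad : ∀ ρ, ρ ≤ 100 * r → ENNReal.ofReal ρ < EMetric.diam S := fun ρ h =>
    (ENNReal.ofReal_le_ofReal h).trans_lt hdiam
  have hμfin : μ (closedBall x (4 * r)) < ⊤ := by
    rw [hμb]
    exact (hreg x hx (4 * r) (by linarith) (hrad _ (by linarith))).2.trans_lt
      ENNReal.ofReal_lt_top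
  have hνle : ∀ y ρ, 0 ≤ ρ → ν (closedBall y ρ) ≤ ENNReal.ofReal (c * (w * (2 * ρ) ^ d)) := by
    intro y ρ hρ
    rw [hνb, ENNReal.ofReal_mul hc.le]
    gcongr
    rcases ((V : Set (EuclideanSpace ℝ (Fin (d+1)))) ∩ closedBall y ρ).eq_empty_or_nonempty
      with h | ⟨p, hp, hp'⟩
    · rw [h]; simp
    · rw [← hball V hVd p hp (2 * ρ) (by positivity)]
      apply measure_mono
      apply Set.inter_subset_inter_right
      apply closedBall_subset_closedBall'
      rw [mem_closedBall, dist_comm] at hp'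
      linarith
  have hνfin : ∀ y ρ, 0 ≤ ρ → ν (closedBall y ρ) < ⊤ := fun y ρ h =>
    (hνle y ρ h).trans_lt ENNReal.ofReal_lt_top
  have htest : ∀ y ρ, closedBall y ρ ⊆ closedBall x (4 * r) →
      |(∫ z, max 0 (ρ - dist z y) ∂μ) - ∫ z, max 0 (ρ - dist z y) ∂ν|
        < C₁⁻¹ * (4 ^ (d + 1))⁻¹ * (δ / 2) ^ (d + 1) * r ^ (d + 1) := by
    intro y ρ h
    exact (le_FDist d μ ν x (4 * r) (by positivity) hμfin (hνfin _ _ (by positivity)) _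
      (tent_lip y ρ) (fun z => le_max_left _ _) ((tent_supp y ρ).trans h)).trans_lt hF
  have hμlow : ∀ y ∈ S, ∀ ρ, 0 < ρ → ρ ≤ 100 * r → closedBall y ρ ⊆ closedBall x (4 * r) →
      C₁⁻¹ * (ρ / 2) ^ (d + 1) ≤ ∫ z, max 0 (ρ - dist z y) ∂μ := by
    intro y hy ρ hρ hρ' hsub
    have hfin : μ (closedBall y ρ) < ⊤ := (measure_mono hsub).trans_lt hμfin
    refine le_trans ?_ (tent_lower μ y ρ hρ hfin)
    have h1 := (hreg y hy (ρ / 2) (by positivity) (hrad _ (by linarith))).1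
    rw [← hμb, Real.rpow_natCast] at h1
    have h2 : μ (closedBall y (ρ / 2)) ≠ ⊤ :=
      ((measure_mono (closedBall_subset_closedBall (by linarith))).trans_lt hfin).ne
    have h3 := (ENNReal.ofReal_le_iff_le_toReal h2).1 h1
    calc C₁⁻¹ * (ρ / 2) ^ (d + 1) = (ρ / 2) * (C₁⁻¹ * (ρ / 2) ^ d) := by ring
      _ ≤ _ := by gcongr
  have hsmall : ((4 : ℝ) ^ (d + 1))⁻¹ ≤ 1 / 4 := by
    rw [one_div]
    apply inv_anti₀ (by norm_num)
    calc (4 : ℝ) = 4 ^ 1 := by norm_num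
      _ ≤ 4 ^ (d + 1) := pow_le_pow_right₀ (by norm_num) (by omega)
  have hsub : ∀ y, y ∈ closedBall x r → closedBall y (δ * r) ⊆ closedBall x (4 * r) := by
    intro y hy
    apply closedBall_subset_closedBall'
    have : dist y x ≤ r := hy
    nlinarith
  have hδr : 0 < δ * r := by positivity
  constructor
  · rintro y ⟨hyS, hyx⟩
    by_contra! hlt
    have h1 := htest y (δ * r) (hsub y hyx)
    have h2 := hμlow y hyS (δ * r) hδr (by nlinarith) (hsub y hyx)
    have h3 : ∫ z, max 0 (δ * r - dist z y) ∂ν = 0 := by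
      rw [hνdef, integral_smul_measure, tent_zero _ _ hVm y _ hlt, smul_zero]
    rw [h3, sub_zero] at h1
    have h4 := (le_abs_self _).trans_lt h1
    have h5 : C₁⁻¹ * (δ * r / 2) ^ (d + 1) = C₁⁻¹ * (δ / 2) ^ (d + 1) * r ^ (d + 1) := by
      rw [mul_assoc, ← mul_pow]; ring_nf
    have h6 : 0 < C₁⁻¹ * (δ / 2) ^ (d + 1) * r ^ (d + 1) := by positivity
    nlinarith
  · rintro y ⟨hyV, hyx⟩
    by_contra! hlt
    -- lower bound for c
    have hcw : C₁⁻¹ * (4 ^ (d + 1))⁻¹ ≤ c * w := by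
      have hs2 : closedBall x (2 * r) ⊆ closedBall x (4 * r) :=
        closedBall_subset_closedBall (by linarith)
      have h1 := htest x (2 * r) hs2
      have h2 := hμlow x hx (2 * r) (by positivity) (by linarith) hs2
      have h3 := integral_le_ball ν x (2 * r) (2 * r) (hνfin _ _ (by positivity))
        (fun z => max 0 (2 * r - dist z x)) (fun z => le_max_left _ _)
        (fun z => max_le (by positivity) (by linarith [dist_nonneg (x := z) (y := x)]))
        (tent_supp x (2 * r))
      have h4 : (ν (closedBall x (2 * r))).toReal ≤ c * (w * (2 * (2 * r)) ^ d) :=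
        ENNReal.toReal_le_of_le_ofReal (by positivity) (hνle _ _ (by positivity))
      have h5 : 2 * r * (ν (closedBall x (2 * r))).toReal
          ≤ 2 * r * (c * (w * (2 * (2 * r)) ^ d)) := by gcongr
      have h6 : 2 * r * (c * (w * (2 * (2 * r)) ^ d))
          = (c * w) * 4 ^ (d + 1) / 2 * r ^ (d + 1) := by
        rw [show 2 * (2 * r) = 4 * r by ring, mul_pow]; ring
      have h7 : C₁⁻¹ * (2 * r / 2) ^ (d + 1) = C₁⁻¹ * r ^ (d + 1) := by
        rw [show 2 * r / 2 = r by ring]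
      have h8 := (le_abs_self _).trans_lt h1
      have h9 : C₁⁻¹ * (4 ^ (d + 1))⁻¹ * (δ / 2) ^ (d + 1) * r ^ (d + 1)
          ≤ C₁⁻¹ * (1 / 4) * 1 * r ^ (d + 1) := by
        gcongr
        exact pow_le_one₀ (by positivity) (by linarith)
      have hrp : 0 < r ^ (d + 1) := by positivity
      have h10 : C₁⁻¹ * r ^ (d + 1) ≤ ((c * w) * 4 ^ (d + 1)) * r ^ (d + 1) := by
        have : 0 < C₁⁻¹ * r ^ (d + 1) := by positivity
        linarith
      have h11 := le_of_mul_le_mul_right h10 hrp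
      rw [← div_eq_mul_inv, div_le_iff₀ (by positivity)]
      exact h11
    have h1 := htest y (δ * r) (hsub y hyx)
    have h2 := tent_lower ν y (δ * r) hδr (hνfin _ _ hδr.le)
    have h3 : ∫ z, max 0 (δ * r - dist z y) ∂μ = 0 := tent_zero _ _ hS.measurableSet y _ hlt
    rw [hνb, hball V hVd y hyV _ (by positivity), ← ENNReal.ofReal_mul hc.le,
      ENNReal.toReal_ofReal (by positivity)] at h2
    rw [h3, zero_sub, abs_neg] at h1
    have h4 := (le_abs_self _).trans_lt h1
    have h5 : δ * r / 2 * (c * (w * (δ * r / 2) ^ d))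
        = (c * w) * (δ / 2) ^ (d + 1) * r ^ (d + 1) := by
      rw [show δ * r / 2 = (δ / 2) * r by ring, mul_pow]; ring
    have h6 : C₁⁻¹ * (4 ^ (d + 1))⁻¹ * (δ / 2) ^ (d + 1) * r ^ (d + 1)
        ≤ (c * w) * (δ / 2) ^ (d + 1) * r ^ (d + 1) := by gcongr
    linarith

/-- if `Σ ⊆ ℝ^{d+1}` is Ahlfors `d`-regular with constant `C₁` and
`bβ_Σ(x,r) ≥ β` for some `x ∈ Σ`, `0 < r < diam Σ / 100`, then
`α_{H^d|_Σ}(x,4r) ≥ ε` for some `ε = ε(d,C₁,β) > 0`. -/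
theorem stmt1 (d : ℕ) (C₁ β : ℝ) (hC₁ : 1 ≤ C₁) (hβ : 0 < β) :
    ∃ ε : ℝ, 0 < ε ∧
      ∀ (S : Set (EuclideanSpace ℝ (Fin (d+1)))), IsClosed S →
        AhlforsRegular (d : ℝ) C₁ S →
        ∀ x ∈ S, ∀ r : ℝ, 0 < r → ENNReal.ofReal (100 * r) < EMetric.diam S →
          β ≤ bbeta d S x r →
          ε ≤ alphaA d ((μH[(d : ℝ)]).restrict S) x (4 * r) := by
  obtain ⟨w, hw, hball⟩ := ball_plane d
  have hC0 : 0 < C₁ := by linarith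
  set δ : ℝ := min 1 (β / 4) with hδdef
  have hδ : 0 < δ := by positivity
  have hδ1 : δ ≤ 1 := min_le_left _ _
  have hδβ : δ ≤ β / 4 := min_le_right _ _
  set K : ℝ := C₁⁻¹ * (4 ^ (d + 1))⁻¹ * (δ / 2) ^ (d + 1) with hK
  have hKpos : 0 < K := by positivity
  refine ⟨(4 ^ (d + 1))⁻¹ * K, by positivity, ?_⟩
  intro S hS hreg x hx r hr hdiam hb
  have hne : ∃ V : AffineSubspace ℝ (EuclideanSpace ℝ (Fin (d+1))),
      (V : Set (EuclideanSpace ℝ (Fin (d+1)))).Nonempty ∧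
      Module.finrank ℝ V.direction = d := by
    by_contra! h
    have : bbeta d S x r = 0 := by
      unfold bbeta
      convert Real.sInf_empty
      rw [Set.eq_empty_iff_forall_notMem]
      rintro t ⟨V, h1, h2, -⟩
      exact h V h1 h2
    linarith
  obtain ⟨V₀, h₀, h₀'⟩ := hne
  unfold alphaA
  refine le_csInf ⟨_, V₀, h₀, h₀', rfl⟩ ?_
  rintro t ⟨V, hVne, hVd, rfl⟩
  unfold alphaV
  have hmain : K * r ^ (d + 1) ≤ sInf { t : ℝ | ∃ c : ℝ, 0 < c ∧
      t = FDist ((μH[(d : ℝ)]).restrict S) (ENNReal.ofReal c •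
            (μH[(d : ℝ)]).restrict (V : Set (EuclideanSpace ℝ (Fin (d+1)))))
          (closedBall x (4 * r)) } := by
    refine le_csInf ⟨_, 1, one_pos, rfl⟩ ?_
    rintro t ⟨c, hc, rfl⟩
    by_contra! hlt
    obtain ⟨k1, k2⟩ := key d C₁ w δ hC₁ hw hδ hδ1 hball S hS hreg x hx r hr hdiam V hVd c hc hlt
    have hle : bbeta d S x r ≤ δ + δ := by
      unfold bbeta
      refine csInf_le_of_le ?_ ⟨V, hVne, hVd, rfl⟩ ?_
      · refine ⟨0, ?_⟩
        rintro t ⟨W, -, -, rfl⟩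
        refine add_nonneg (div_nonneg (Real.sSup_nonneg ?_) hr.le)
          (div_nonneg (Real.sSup_nonneg ?_) hr.le)
        · rintro _ ⟨y, -, rfl⟩; exact infDist_nonneg
        · rintro _ ⟨y, -, rfl⟩; exact infDist_nonneg
      · refine add_le_add ?_ ?_
        · rw [div_le_iff₀ hr]
          refine Real.sSup_le ?_ (by positivity)
          rintro _ ⟨y, hy, rfl⟩; exact k1 y hy
        · rw [div_le_iff₀ hr]
          refine Real.sSup_le ?_ (by positivity)
          rintro _ ⟨y, hy, rfl⟩; exact k2 y hy
    linarith
  have hpow : (4 * r) ^ (-(d : ℝ) - 1) = ((4 * r) ^ (d + 1))⁻¹ := by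
    rw [show -(d : ℝ) - 1 = -((d + 1 : ℕ) : ℝ) by push_cast; ring,
      Real.rpow_neg (by positivity), Real.rpow_natCast]
  rw [hpow]
  calc (4 ^ (d + 1))⁻¹ * K = ((4 * r) ^ (d + 1))⁻¹ * (K * r ^ (d + 1)) := by
        rw [mul_pow]; field_simp
    _ ≤ _ := by gcongr
end

section
/- Let d ∈ ℕ, C₁ ≥ 1 and δ ∈ (0,1]. There exists ε > 0, depending only on d, C₁ and δ, such that the following holds: if Σ ⊆ ℝ^{d+1} is a closed set which is Ahlfors d-regular with constant C₁, x ∈ Σ, 0 < r < (diam Σ)/100, V ⊆ ℝ^{d+1} is a d-dimensional affine plane with V ∩ B(x,4r) ≠ ∅, and there exists y ∈ V ∩ B(x,r) with dist(y,Σ) ≥ δr, then α_{H^d|_Σ}(x,4r,V) ≥ ε. -/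
open MeasureTheory Metric Filter
open scoped ENNReal NNReal

open MeasureTheory Metric Filter
open scoped ENNReal


section Helpers

lemma integrable_of_bdd_supp {n : ℕ} (μ : Measure (EuclideanSpace ℝ (Fin n)))
    (B : Set (EuclideanSpace ℝ (Fin n))) (hB : MeasurableSet B) (hμ : μ B < ⊤)
    (f : EuclideanSpace ℝ (Fin n) → ℝ) (hf : Continuous f) (h0 : ∀ x, 0 ≤ f x)
    (M : ℝ) (hM : ∀ x ∈ B, f x ≤ M) (hs : Function.support f ⊆ B) :
    Integrable f μ ∧ ∫ x, f x ∂μ ≤ M * μ.real B := by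
  have hb : ∀ x ∈ B, ‖f x‖ ≤ M := fun x hx => by
    rw [Real.norm_of_nonneg (h0 x)]; exact hM x hx
  constructor
  · rw [← integrableOn_iff_integrable_of_support_subset hs]
    exact IntegrableOn.of_bound hμ hf.aestronglyMeasurable M
      ((ae_restrict_iff' hB).2 (Eventually.of_forall hb))
  · rw [← setIntegral_eq_integral_of_forall_compl_eq_zero
      (s := B) (fun x hx => Function.notMem_support.1 (fun h => hx (hs h)))]
    exact (le_abs_self _).trans (norm_setIntegral_le_of_norm_le_const hμ hb)

/-- tent function -/
noncomputable def tentF {n : ℕ} (p : EuclideanSpace ℝ (Fin n)) (R : ℝ) (z : EuclideanSpace ℝ (Fin n)) : ℝ :=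
  max (R - dist z p) 0

lemma tentF_lip {n : ℕ} (p : EuclideanSpace ℝ (Fin n)) (R : ℝ) :
    LipschitzWith 1 (tentF p R) := by
  have h : LipschitzWith 1 (fun z : EuclideanSpace ℝ (Fin n) => R - dist z p) := by
    refine LipschitzWith.of_dist_le_mul fun a b => ?_
    rw [Real.dist_eq]
    have : R - dist a p - (R - dist b p) = dist b p - dist a p := by ring
    rw [this, NNReal.coe_one, one_mul, dist_comm a b]
    exact abs_dist_sub_le b a p
  exact h.max_const 0

lemma tentF_nonneg {n : ℕ} (p : EuclideanSpace ℝ (Fin n)) (R : ℝ) (z) : 0 ≤ tentF p R z :=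
  le_max_right _ _

lemma tentF_supp {n : ℕ} (p : EuclideanSpace ℝ (Fin n)) (R : ℝ) :
    Function.support (tentF p R) ⊆ closedBall p R := by
  intro z hz
  by_contra h
  rw [mem_closedBall, not_le] at h
  exact hz (max_eq_right (by linarith))

lemma tentF_le {n : ℕ} (p : EuclideanSpace ℝ (Fin n)) (R : ℝ) (hR : 0 ≤ R) (z) :
    tentF p R z ≤ R := max_le (by linarith [dist_nonneg (x := z) (y := p)]) hR

lemma tentF_ge {n : ℕ} (μ : Measure (EuclideanSpace ℝ (Fin n))) (p : EuclideanSpace ℝ (Fin n))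
    (R : ℝ) (hR : 0 < R) (hμ : μ (closedBall p R) < ⊤) :
    R / 2 * μ.real (closedBall p (R / 2)) ≤ ∫ z, tentF p R z ∂μ := by
  have hi := (integrable_of_bdd_supp μ _ measurableSet_closedBall hμ (tentF p R)
    (tentF_lip p R).continuous (tentF_nonneg p R) R (fun z _ => tentF_le p R hR.le z)
    (tentF_supp p R)).1
  refine le_trans ?_ (mul_meas_ge_le_integral_of_nonneg
    (Eventually.of_forall (tentF_nonneg p R)) hi (R / 2))
  refine mul_le_mul_of_nonneg_left ?_ (by positivity)
  refine measureReal_mono ?_ (ne_of_lt ((measure_mono ?_).trans_lt hμ))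
  · intro z hz
    rw [mem_closedBall] at hz
    show R / 2 ≤ max (R - dist z p) 0
    exact le_max_of_le_left (by linarith)
  · intro z hz
    exact tentF_supp p R (ne_of_gt (lt_of_lt_of_le (by positivity) hz))

lemma FDist_bdd {d : ℕ} (μ ν : Measure (EuclideanSpace ℝ (Fin (d+1))))
    (x : EuclideanSpace ℝ (Fin (d+1))) (R : ℝ)
    (hμ : μ (closedBall x R) < ⊤) (hν : ν (closedBall x R) < ⊤) :
    BddAbove { t : ℝ | ∃ f : EuclideanSpace ℝ (Fin (d+1)) → ℝ,
    LipschitzWith 1 f ∧ (∀ x, 0 ≤ f x) ∧ Function.support f ⊆ closedBall x R ∧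
    t = |(∫ x, f x ∂μ) - ∫ x, f x ∂ν| } := by
  obtain ⟨w, hw⟩ : ∃ w, w ∉ closedBall x R := by
    by_contra! h
    exact NormedSpace.unbounded_univ ℝ (EuclideanSpace ℝ (Fin (d+1)))
      (isBounded_closedBall.subset (fun z _ => h z))
  refine ⟨(R + dist x w) * μ.real (closedBall x R) + (R + dist x w) * ν.real (closedBall x R), ?_⟩
  rintro t ⟨f, hf, h0, hs, rfl⟩
  have hfw : f w = 0 := Function.notMem_support.1 (fun h => hw (hs h))
  have hM : ∀ z ∈ closedBall x R, f z ≤ R + dist x w := by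
    intro z hz
    have h1 := hf.dist_le_mul z w
    rw [hfw, Real.dist_eq, sub_zero, NNReal.coe_one, one_mul] at h1
    have := dist_triangle z x w
    rw [mem_closedBall] at hz
    linarith [le_abs_self (f z)]
  have h1 := (integrable_of_bdd_supp μ _ measurableSet_closedBall hμ f hf.continuous h0 _ hM hs).2
  have h2 := (integrable_of_bdd_supp ν _ measurableSet_closedBall hν f hf.continuous h0 _ hM hs).2
  have h3 : 0 ≤ ∫ x, f x ∂μ := integral_nonneg h0
  have h4 : 0 ≤ ∫ x, f x ∂ν := integral_nonneg h0
  rw [abs_le]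
  constructor <;> linarith

/-- the measure of the unit ball -/
noncomputable def unitA (d : ℕ) : ℝ := (μH[(d : ℝ)] : Measure (EuclideanSpace ℝ (Fin d))).real (closedBall 0 1)

lemma haarH (d : ℕ) :
    (μH[(d : ℝ)] : Measure (EuclideanSpace ℝ (Fin d))).IsAddHaarMeasure := by
  simpa using MeasureTheory.isAddHaarMeasure_hausdorffMeasure (E := EuclideanSpace ℝ (Fin d))

lemma unitA_pos (d : ℕ) : 0 < unitA d := by
  have := haarH d
  exact ENNReal.toReal_pos (measure_closedBall_pos _ _ one_pos).ne'
    measure_closedBall_lt_top.ne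

lemma plane_ball (d : ℕ) (V : AffineSubspace ℝ (EuclideanSpace ℝ (Fin (d+1))))
    (hV : Module.finrank ℝ V.direction = d) (y : EuclideanSpace ℝ (Fin (d+1))) (hy : y ∈ V)
    (ρ : ℝ) (hρ : 0 ≤ ρ) :
    μH[(d : ℝ)] (closedBall y ρ ∩ (V : Set (EuclideanSpace ℝ (Fin (d+1)))))
      = ENNReal.ofReal (ρ ^ d * unitA d) := by
  have := haarH d
  let L : EuclideanSpace ℝ (Fin d) ≃ₗᵢ[ℝ] V.direction :=
    ((stdOrthonormalBasis ℝ V.direction).reindex (finCongr hV)).repr.symm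
  let φ : EuclideanSpace ℝ (Fin d) → EuclideanSpace ℝ (Fin (d+1)) := fun w => (L w : _) + y
  have hφ : Isometry φ := by
    refine Isometry.of_dist_eq fun a b => ?_
    simp only [φ, dist_add_right]
    exact L.isometry.dist_eq a b
  have him : closedBall y ρ ∩ (V : Set (EuclideanSpace ℝ (Fin (d+1)))) = φ '' closedBall 0 ρ := by
    ext z
    constructor
    · rintro ⟨h1, h2⟩
      have hz : z - y ∈ V.direction := AffineSubspace.vsub_mem_direction h2 hy
      refine ⟨L.symm ⟨z - y, hz⟩, ?_, by simp [φ]⟩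
      rw [mem_closedBall, dist_zero_right, L.symm.norm_map]
      rw [mem_closedBall, dist_eq_norm] at h1
      exact h1
    · rintro ⟨w, hw, rfl⟩
      refine ⟨?_, AffineSubspace.vadd_mem_of_mem_direction (L w).2 hy⟩
      rw [mem_closedBall, dist_zero_right] at hw
      simp only [φ, mem_closedBall, dist_eq_norm, add_sub_cancel_right]
      rw [Submodule.norm_coe, L.norm_map]
      exact hw
  rw [him, hφ.hausdorffMeasure_image (Or.inl (Nat.cast_nonneg d)),
    Measure.addHaar_closedBall' _ _ hρ, unitA, ENNReal.ofReal_mul (by positivity),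
    measureReal_def, ENNReal.ofReal_toReal measure_closedBall_lt_top.ne]
  simp

end Helpers

/-- if `Σ` is Ahlfors `d`-regular with constant `C₁`, `x ∈ Σ`,
`0 < r < diam Σ / 100`, and `V` is a `d`-plane meeting `B(x,4r)` with a point
`y ∈ V ∩ B(x,r)` satisfying `dist(y,Σ) ≥ δr`, then `α_{H^d|_Σ}(x,4r,V) ≥ ε`
for some `ε = ε(d,C₁,δ) > 0`. -/
theorem stmt3 (d : ℕ) (C₁ δ : ℝ) (hC₁ : 1 ≤ C₁) (hδ0 : 0 < δ) (hδ1 : δ ≤ 1) :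
    ∃ ε : ℝ, 0 < ε ∧
      ∀ (S : Set (EuclideanSpace ℝ (Fin (d+1)))), IsClosed S →
        AhlforsRegular (d : ℝ) C₁ S →
        ∀ x ∈ S, ∀ r : ℝ, 0 < r → ENNReal.ofReal (100 * r) < EMetric.diam S →
          ∀ V : AffineSubspace ℝ (EuclideanSpace ℝ (Fin (d+1))),
            (V : Set (EuclideanSpace ℝ (Fin (d+1)))).Nonempty →
            Module.finrank ℝ V.direction = d →
            ((V : Set (EuclideanSpace ℝ (Fin (d+1)))) ∩ closedBall x (4 * r)).Nonempty →
            (∃ y ∈ (V : Set (EuclideanSpace ℝ (Fin (d+1)))) ∩ closedBall x r,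
              δ * r ≤ infDist y S) →
            ε ≤ alphaV d ((μH[(d : ℝ)]).restrict S) x (4 * r) V := by
  have ha := unitA_pos d
  set a := unitA d with ha_def
  set A : ℝ := δ / 2 * ((δ / 2) ^ d * a) with hA
  set B : ℝ := 2 * (3 ^ d * a) with hB
  have hApos : 0 < A := by positivity
  have hBpos : 0 < B := by positivity
  have hCpos : 0 < C₁ := by linarith
  refine ⟨((4 : ℝ) ^ (d + 1))⁻¹ * (C₁⁻¹ * A / (A + B)), by positivity, ?_⟩
  rintro S hS hreg x hx r hr hdiam V - hV - ⟨y, ⟨hyV, hyx⟩, hyS⟩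
  rw [mem_closedBall] at hyx
  have hr4 : ENNReal.ofReal (4 * r) < EMetric.diam S :=
    (ENNReal.ofReal_le_ofReal (by linarith)).trans_lt hdiam
  have hr1 : ENNReal.ofReal r < EMetric.diam S :=
    (ENNReal.ofReal_le_ofReal (by linarith)).trans_lt hdiam
  set μ := (μH[(d : ℝ)]).restrict S with hμdef
  have hμ4 : μ (closedBall x (4 * r)) < ⊤ := by
    rw [hμdef, Measure.restrict_apply measurableSet_closedBall, Set.inter_comm]
    exact (hreg x hx (4 * r) (by positivity) hr4).2.trans_lt ENNReal.ofReal_lt_top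
  have hμ2 : μ (closedBall x (2 * r)) < ⊤ :=
    (measure_mono (closedBall_subset_closedBall (by linarith))).trans_lt hμ4
  have hμ1 : C₁⁻¹ * r ^ d ≤ μ.real (closedBall x r) := by
    have h := (hreg x hx r hr hr1).1
    rw [Set.inter_comm, ← Measure.restrict_apply measurableSet_closedBall, Real.rpow_natCast] at h
    exact (ENNReal.ofReal_le_iff_le_toReal ((measure_mono
      (closedBall_subset_closedBall (by linarith))).trans_lt hμ4).ne).1 h
  have key : ∀ c : ℝ, 0 < c → r ^ (d + 1) * (C₁⁻¹ * A / (A + B)) ≤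
      FDist μ (ENNReal.ofReal c •
            (μH[(d : ℝ)]).restrict (V : Set (EuclideanSpace ℝ (Fin (d+1))))) (closedBall x (4 * r)) := by
    intro c hc
    set ν := ENNReal.ofReal c •
            (μH[(d : ℝ)]).restrict (V : Set (EuclideanSpace ℝ (Fin (d+1)))) with hν
    have hνb : ∀ ρ : ℝ, 0 ≤ ρ → ν (closedBall y ρ) = ENNReal.ofReal (c * (ρ ^ d * a)) := by
      intro ρ hρ
      rw [hν, Measure.smul_apply, Measure.restrict_apply measurableSet_closedBall,
        plane_ball d V hV y hyV ρ hρ, smul_eq_mul, ← ENNReal.ofReal_mul hc.le]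
    have hνr : ∀ ρ : ℝ, 0 ≤ ρ → ν.real (closedBall y ρ) = c * (ρ ^ d * a) := by
      intro ρ hρ
      rw [measureReal_def, hνb ρ hρ, ENNReal.toReal_ofReal (by positivity)]
    have hνt : ∀ ρ : ℝ, 0 ≤ ρ → ν (closedBall y ρ) < ⊤ := by
      intro ρ hρ
      rw [hνb ρ hρ]; exact ENNReal.ofReal_lt_top
    have hν4 : ν (closedBall x (4 * r)) < ⊤ := by
      refine (measure_mono (closedBall_subset_closedBall' ?_)).trans_lt
        (hνt (5 * r) (by positivity))
      rw [dist_comm]; linarith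
    have hbdd := FDist_bdd μ ν x (4 * r) hμ4 hν4
    have hδr : 0 < δ * r := by positivity
    -- first test function
    have t1 : c * A * r ^ (d + 1) ≤ FDist μ ν (closedBall x (4 * r)) := by
      refine le_trans ?_ (le_csSup hbdd ⟨tentF y (δ * r), tentF_lip _ _, tentF_nonneg _ _,
        (tentF_supp _ _).trans (closedBall_subset_closedBall' ?_), rfl⟩)
      · have h0 : ∫ z, tentF y (δ * r) z ∂μ = 0 := by
          refine setIntegral_eq_zero_of_forall_eq_zero fun z hz => ?_
          have := infDist_le_dist_of_mem (x := y) hz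
          rw [dist_comm] at this
          exact max_eq_right (by linarith)
        have h1 := tentF_ge ν y (δ * r) hδr (hνt _ hδr.le)
        rw [hνr _ (by positivity)] at h1
        rw [h0, zero_sub, abs_neg]
        refine le_trans (le_of_eq ?_) (h1.trans (le_abs_self _))
        rw [hA]
        have : δ * r / 2 = δ / 2 * r := by ring
        rw [this, mul_pow, pow_succ]
        ring
      · have : δ * r ≤ 1 * r := mul_le_mul_of_nonneg_right hδ1 hr.le
        linarith
    have t2 : C₁⁻¹ * r ^ (d + 1) - c * B * r ^ (d + 1) ≤ FDist μ ν (closedBall x (4 * r)) := by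
      refine le_trans ?_ (le_csSup hbdd ⟨tentF x (2 * r), tentF_lip _ _, tentF_nonneg _ _,
        (tentF_supp _ _).trans (closedBall_subset_closedBall (by linarith)), rfl⟩)
      have h1 := tentF_ge μ x (2 * r) (by positivity) hμ2
      have h2 := (integrable_of_bdd_supp ν (closedBall y (3 * r)) measurableSet_closedBall
        (hνt _ (by positivity)) (tentF x (2 * r)) (tentF_lip _ _).continuous (tentF_nonneg _ _)
        (2 * r) (fun z _ => tentF_le _ _ (by positivity) z)
        ((tentF_supp _ _).trans (closedBall_subset_closedBall' (by
          rw [dist_comm]; linarith)))).2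
      rw [hνr _ (by positivity)] at h2
      have e : 2 * r / 2 = r := by ring
      rw [e] at h1
      have h3 : r * (C₁⁻¹ * r ^ d) ≤ r * μ.real (closedBall x r) :=
        mul_le_mul_of_nonneg_left hμ1 hr.le
      have e1 : C₁⁻¹ * r ^ (d + 1) = r * (C₁⁻¹ * r ^ d) := by ring
      have e2 : c * B * r ^ (d + 1) = 2 * r * (c * ((3 * r) ^ d * a)) := by
        rw [hB, mul_pow, pow_succ]; ring
      rw [e1, e2]
      refine le_trans ?_ (le_abs_self _)
      linarith
    rw [← mul_div_assoc, div_le_iff₀ (by positivity)]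
    have u1 := mul_le_mul_of_nonneg_right t1 hBpos.le
    have u2 := mul_le_mul_of_nonneg_right t2 hApos.le
    nlinarith
  unfold alphaV
  have hinf := le_csInf (s := { t : ℝ | ∃ c : ℝ, 0 < c ∧
      t = FDist μ (ENNReal.ofReal c •
            (μH[(d : ℝ)]).restrict (V : Set (EuclideanSpace ℝ (Fin (d+1)))))
          (closedBall x (4 * r)) }) ⟨_, 1, one_pos, rfl⟩
    (by rintro t ⟨c, hc, rfl⟩; exact key c hc)
  have hp : (4 * r) ^ (-(d : ℝ) - 1) = ((4 * r) ^ (d + 1))⁻¹ := by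
    rw [← Real.rpow_natCast, ← Real.rpow_neg (by positivity)]
    congr 1; push_cast; ring
  rw [hp]
  refine le_trans (le_of_eq ?_) (mul_le_mul_of_nonneg_left hinf (by positivity))
  rw [mul_pow]
  field_simp
end

section
/- Let ω and σ be finite measures on a measurable space X, let R be a measurable set with ω(R) > 0 and σ(R) > 0, and let (Q_i)_{i∈I} be a countable measurable partition of R. Suppose there exist t ∈ (0,1] and i₀ ∈ I such that σ(Q_{i₀}) ≥ t·σ(R) and ω(Q_{i₀})·σ(R) ≤ (1/16)·ω(R)·σ(Q_{i₀}). Then ∑_{i∈I} ω(Q_i)^{1/2} σ(Q_i)^{1/2} ≤ (1 − t/4)·ω(R)^{1/2} σ(R)^{1/2}. -/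
open MeasureTheory Filter
open scoped ENNReal

/-- if some cell `Q_{i₀}` of a countable measurable partition of `R`
carries a definite proportion of `σ(R)` but has `ω`-density dropping by a factor `16`,
then `∑ ω(Q_i)^{1/2} σ(Q_i)^{1/2} ≤ (1 − t/4) ω(R)^{1/2} σ(R)^{1/2}`. -/
theorem stmt6 {X : Type*} [MeasurableSpace X] (ω σ : Measure X)
    [IsFiniteMeasure ω] [IsFiniteMeasure σ]
    {ι : Type*} [Countable ι]
    (R : Set X) (hR : MeasurableSet R) (hωR : 0 < ω R) (hσR : 0 < σ R)
    (Q : ι → Set X) (hQm : ∀ i, MeasurableSet (Q i))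
    (hdisj : Pairwise (Function.onFun Disjoint Q))
    (hunion : (⋃ i, Q i) = R)
    (t : ℝ) (ht0 : 0 < t) (ht1 : t ≤ 1) (i₀ : ι)
    (hbig : t * (σ R).toReal ≤ (σ (Q i₀)).toReal)
    (hdrop : (ω (Q i₀)).toReal * (σ R).toReal ≤
      (1 / 16) * (ω R).toReal * (σ (Q i₀)).toReal) :
    (∑' i, ((ω (Q i)).toReal) ^ ((1 : ℝ) / 2) * ((σ (Q i)).toReal) ^ ((1 : ℝ) / 2)) ≤
      (1 - t / 4) * ((ω R).toReal) ^ ((1 : ℝ) / 2) * ((σ R).toReal) ^ ((1 : ℝ) / 2) := by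
  classical
  have key : ∀ (μ : Measure X) [IsFiniteMeasure μ],
      HasSum (fun i => (μ (Q i)).toReal) (μ R).toReal := by
    intro μ _
    have h := measure_iUnion (μ := μ) hdisj hQm
    rw [hunion] at h
    have hne : ∑' i, μ (Q i) ≠ ⊤ := by rw [← h]; exact measure_ne_top μ R
    rw [h, ENNReal.tsum_toReal_eq (fun i => measure_ne_top μ _)]
    exact ENNReal.hasSum_toReal hne
  have hω := key ω
  have hσ := key σ
  have hW : 0 < (ω R).toReal := ENNReal.toReal_pos hωR.ne' (measure_ne_top _ _)
  have hS : 0 < (σ R).toReal := ENNReal.toReal_pos hσR.ne' (measure_ne_top _ _)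
  have hw0 : ∀ i, 0 ≤ (ω (Q i)).toReal := fun i => ENNReal.toReal_nonneg
  have hs0 : ∀ i, 0 ≤ (σ (Q i)).toReal := fun i => ENNReal.toReal_nonneg
  generalize (ω R).toReal = W at *
  generalize (σ R).toReal = S at *
  generalize hw : (fun i => (ω (Q i)).toReal) = w at *
  generalize hs : (fun i => (σ (Q i)).toReal) = s at *
  have hw' : ∀ i, (ω (Q i)).toReal = w i := fun i => by rw [← hw]
  have hs' : ∀ i, (σ (Q i)).toReal = s i := fun i => by rw [← hs]
  simp only [hw', hs', ← Real.sqrt_eq_rpow] at *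
  clear hw hs hw' hs' key
  have hp : 0 < √W := Real.sqrt_pos.2 hW
  have hq : 0 < √S := Real.sqrt_pos.2 hS
  have hpp : √W ^ 2 = W := Real.sq_sqrt hW.le
  have hqq : √S ^ 2 = S := Real.sq_sqrt hS.le
  generalize √W = p at *
  generalize √S = q at *
  have hg : HasSum (fun i => (q / p * w i + p / q * s i) / 2 -
      (if i = i₀ then p / q * s i₀ / 4 else 0))
      ((q / p * W + p / q * S) / 2 - p / q * s i₀ / 4) :=
    (((hω.mul_left _).add (hσ.mul_left _)).div_const 2).sub (hasSum_ite_eq i₀ _)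
  have hle : ∀ i, √(w i) * √(s i) ≤ (q / p * w i + p / q * s i) / 2 -
      (if i = i₀ then p / q * s i₀ / 4 else 0) := by
    intro i
    have hx := Real.sqrt_nonneg (w i)
    have hy := Real.sqrt_nonneg (s i)
    have hxx := Real.sq_sqrt (hw0 i)
    have hyy := Real.sq_sqrt (hs0 i)
    split_ifs with hi
    · subst hi
      generalize √(w i) = x at *
      generalize √(s i) = y at *
      have h1 : x * q ≤ p * y / 4 := by
        refine (sq_le_sq₀ (by positivity) (by positivity)).1 ?_
        rw [← hxx, ← hyy, ← hpp, ← hqq] at hdrop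
        nlinarith
      have h2 : x ≤ p / q * y / 4 := by
        have : p / q * y / 4 = (p * y / 4) / q := by field_simp
        rw [this, le_div_iff₀ hq]; exact h1
      have h3 : 0 ≤ q / p * w i := mul_nonneg (by positivity) (hw0 i)
      have h4 := mul_le_mul_of_nonneg_right h2 hy
      have h5 : p / q * y / 4 * y = p / q * s i / 4 := by rw [← hyy]; ring
      linarith
    · rw [← hxx, ← hyy, Real.sqrt_sq hx, Real.sqrt_sq hy]
      generalize √(w i) = x at *
      generalize √(s i) = y at *
      have : (q / p * x ^ 2 + p / q * y ^ 2) / 2 - 0 - x * y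
        = (q * x - p * y) ^ 2 / (2 * p * q) := by field_simp; ring
      have h2 : 0 ≤ (q * x - p * y) ^ 2 / (2 * p * q) := by positivity
      linarith
  have hf : Summable (fun i => √(w i) * √(s i)) :=
    Summable.of_nonneg_of_le (fun i => by positivity) hle hg.summable
  refine (hasSum_le hle hf.hasSum hg).trans ?_
  have h1 : (q / p * W + p / q * S) / 2 = p * q := by
    rw [← hpp, ← hqq]; field_simp; ring
  have h2 : p / q * (t * S) ≤ p / q * s i₀ := mul_le_mul_of_nonneg_left hbig (by positivity)
  have h3 : p / q * (t * S) = t * p * q := by rw [← hqq]; field_simp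
  rw [h1]
  linarith
end

section
/- Let ω and σ be finite measures on a measurable space X, let R be a measurable set with ω(R) > 0 and σ(R) > 0, and let (Q_i)_{i∈I} be a countable measurable partition of R. Suppose there exist t ∈ (0,1] and i₀ ∈ I such that ω(Q_{i₀}) ≥ t·ω(R) and ω(Q_{i₀})·σ(R) ≥ 16·ω(R)·σ(Q_{i₀}). Then ∑_{i∈I} ω(Q_i)^{1/2} σ(Q_i)^{1/2} ≤ (1 − t/4)·ω(R)^{1/2} σ(R)^{1/2}. -/
open MeasureTheory Filter
open scoped ENNReal

theorem aux_real (W S w v t P V U : ℝ) (hW : 0 < W) (hS : 0 < S) (hw0 : 0 ≤ w) (hv0 : 0 ≤ v)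
    (hbig : t * W ≤ w) (hjump : 16 * W * v ≤ w * S)
    (hU : U ≤ W - w) (hU0 : 0 ≤ U) (hV : V ≤ S - v)
    (hP : P ≤ √w * √v + √U * √V) :
    P ≤ (1 - t / 4) * √W * √S := by
  obtain ⟨a, rfl⟩ : ∃ a, w = a * W := ⟨w / W, by field_simp⟩
  have ha0 : 0 ≤ a := nonneg_of_mul_nonneg_left hw0 hW
  have hta : t ≤ a := le_of_mul_le_mul_right hbig hW
  have ha1 : a ≤ 1 := by
    by_contra hc
    push Not at hc
    nlinarith
  have hv : 16 * v ≤ a * S := by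
    have : (16 * v) * W ≤ (a * S) * W := by linarith
    exact le_of_mul_le_mul_right this hW
  have h1 : √(a * W) * √v ≤ (a / 4) * (√W * √S) := by
    rw [← Real.sqrt_mul hw0, ← Real.sqrt_mul hW.le]
    refine Real.sqrt_le_iff.2 ⟨by positivity, ?_⟩
    rw [mul_pow, Real.sq_sqrt (by positivity)]
    have : 0 ≤ a * W * (a * S - 16 * v) := mul_nonneg hw0 (by linarith)
    nlinarith
  have h2 : √U ≤ (1 - a / 2) * √W := by
    refine Real.sqrt_le_iff.2 ⟨mul_nonneg (by linarith) (by positivity), ?_⟩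
    rw [mul_pow, Real.sq_sqrt hW.le]
    nlinarith [mul_nonneg (sq_nonneg a) hW.le]
  have h3 : √V ≤ √S := Real.sqrt_le_sqrt (by linarith)
  have h4 : √U * √V ≤ ((1 - a / 2) * √W) * √S :=
    mul_le_mul h2 h3 (by positivity) (mul_nonneg (by linarith) (by positivity))
  have h5 : 0 ≤ (a - t) * (√W * √S) := mul_nonneg (by linarith) (by positivity)
  nlinarith

theorem aux_sum {X : Type*} [MeasurableSpace X] (μ : Measure X) [IsFiniteMeasure μ]
    {ι : Type*} (R : Set X) (Q : ι → Set X) (hQm : ∀ i, MeasurableSet (Q i))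
    (hdisj : Pairwise (Function.onFun Disjoint Q)) (hunion : (⋃ i, Q i) = R) (s : Finset ι) :
    ∑ i ∈ s, (μ (Q i)).toReal ≤ (μ R).toReal := by
  rw [← ENNReal.toReal_sum (fun i _ => measure_ne_top μ _),
    ← measure_biUnion_finset (fun i _ j _ h => hdisj h) (fun i _ => hQm i)]
  refine ENNReal.toReal_mono (measure_ne_top μ _) (measure_mono ?_)
  rw [← hunion]
  exact Set.iUnion₂_subset fun i _ => Set.subset_iUnion Q i

/-- if some cell `Q_{i₀}` of a countable measurable partition of `R`
carries a definite proportion of `ω(R)` and has `ω`-density increasing by a factor `16`,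
then `∑ ω(Q_i)^{1/2} σ(Q_i)^{1/2} ≤ (1 − t/4) ω(R)^{1/2} σ(R)^{1/2}`. -/
theorem stmt7 {X : Type*} [MeasurableSpace X] (ω σ : Measure X)
    [IsFiniteMeasure ω] [IsFiniteMeasure σ]
    {ι : Type*} [Countable ι]
    (R : Set X) (hR : MeasurableSet R) (hωR : 0 < ω R) (hσR : 0 < σ R)
    (Q : ι → Set X) (hQm : ∀ i, MeasurableSet (Q i))
    (hdisj : Pairwise (Function.onFun Disjoint Q))
    (hunion : (⋃ i, Q i) = R)
    (t : ℝ) (ht0 : 0 < t) (ht1 : t ≤ 1) (i₀ : ι)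
    (hbig : t * (ω R).toReal ≤ (ω (Q i₀)).toReal)
    (hjump : 16 * (ω R).toReal * (σ (Q i₀)).toReal ≤
      (ω (Q i₀)).toReal * (σ R).toReal) :
    (∑' i, ((ω (Q i)).toReal) ^ ((1 : ℝ) / 2) * ((σ (Q i)).toReal) ^ ((1 : ℝ) / 2)) ≤
      (1 - t / 4) * ((ω R).toReal) ^ ((1 : ℝ) / 2) * ((σ R).toReal) ^ ((1 : ℝ) / 2) := by
  classical
  simp only [← Real.sqrt_eq_rpow]
  have hW : 0 < (ω R).toReal := ENNReal.toReal_pos hωR.ne' (measure_ne_top ω _)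
  have hS : 0 < (σ R).toReal := ENNReal.toReal_pos hσR.ne' (measure_ne_top σ _)
  refine tsum_le_of_sum_le' ?_ fun s => ?_
  · exact mul_nonneg (mul_nonneg (by linarith) (by positivity)) (by positivity)
  have hn : i₀ ∉ s.erase i₀ := Finset.notMem_erase i₀ s
  have hω := aux_sum ω R Q hQm hdisj hunion (insert i₀ (s.erase i₀))
  have hσ := aux_sum σ R Q hQm hdisj hunion (insert i₀ (s.erase i₀))
  rw [Finset.sum_insert hn] at hω hσ
  refine aux_real _ _ (ω (Q i₀)).toReal (σ (Q i₀)).toReal t _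
    (∑ i ∈ s.erase i₀, (σ (Q i)).toReal) (∑ i ∈ s.erase i₀, (ω (Q i)).toReal)
    hW hS ENNReal.toReal_nonneg ENNReal.toReal_nonneg hbig hjump
    (by linarith) (Finset.sum_nonneg fun _ _ => ENNReal.toReal_nonneg) (by linarith) ?_
  have hcs := Real.sum_sqrt_mul_sqrt_le (s.erase i₀)
    (f := fun i => (ω (Q i)).toReal) (g := fun i => (σ (Q i)).toReal)
    (fun _ => ENNReal.toReal_nonneg) (fun _ => ENNReal.toReal_nonneg)
  calc _ ≤ ∑ i ∈ insert i₀ (s.erase i₀), √(ω (Q i)).toReal * √(σ (Q i)).toReal := by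
        refine Finset.sum_le_sum_of_subset_of_nonneg ?_ fun _ _ _ => by positivity
        intro i hi
        by_cases h : i = i₀ <;> simp [h, hi]
    _ ≤ _ := by
        rw [Finset.sum_insert hn]
        linarith
end

section
/- Let ω be a finite Borel measure on a metric space X, let Q₀ ⊆ X be a Borel set, and for each n ∈ ℕ let 𝒟_n be a countable Borel partition of Q₀ with sup_{Q∈𝒟_n} diam Q → 0 as n → ∞. Let t > 0, C > 0 and γ ∈ (0,1), and suppose that for every n, ∑_{Q ∈ 𝒟_n : ω(Q) ≤ (diam Q)^t} ω(Q) ≤ C·γ^n. Let G be the set of points x ∈ Q₀ for which there exists r₀ > 0 such that every Q ∈ ⋃_n 𝒟_n with x ∈ Q and diam Q < r₀ satisfies ω(Q) ≤ (diam Q)^t. Then ω(G) = 0. -/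
open MeasureTheory Filter
open scoped ENNReal Classical

/-- if for each `n` the total `ω`-mass of the cells `Q` of the `n`-th
partition with `ω(Q) ≤ (diam Q)^t` is at most `C γ^n`, then the set of points all of
whose sufficiently small cells satisfy `ω(Q) ≤ (diam Q)^t` is `ω`-null. -/
theorem stmt9 {X : Type*} [MetricSpace X] [MeasurableSpace X] [BorelSpace X]
    (ω : Measure X) [IsFiniteMeasure ω]
    (Q₀ : Set X) (hQ₀ : MeasurableSet Q₀)
    (D : ℕ → ℕ → Set X)
    (hmeas : ∀ n i, MeasurableSet (D n i))
    (hdisj : ∀ n, Pairwise (Function.onFun Disjoint (D n)))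
    (hcover : ∀ n, (⋃ i, D n i) = Q₀)
    (hdiam : Tendsto (fun n => ⨆ i, EMetric.diam (D n i)) atTop (nhds 0))
    (t : ℝ) (ht : 0 < t) (C : ℝ) (hC : 0 < C) (γ : ℝ) (hγ0 : 0 < γ) (hγ1 : γ < 1)
    (hsum : ∀ n, (∑' i, if ω (D n i) ≤ EMetric.diam (D n i) ^ t then ω (D n i) else 0)
      ≤ ENNReal.ofReal (C * γ ^ n)) :
    ω {x ∈ Q₀ | ∃ r₀ : ℝ, 0 < r₀ ∧ ∀ n i, x ∈ D n i →
        EMetric.diam (D n i) < ENNReal.ofReal r₀ →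
        ω (D n i) ≤ EMetric.diam (D n i) ^ t} = 0 := by
  have hB : ∀ n, ω {x | ∃ i, x ∈ D n i ∧ ω (D n i) ≤ EMetric.diam (D n i) ^ t}
      ≤ ENNReal.ofReal (C * γ ^ n) := by
    intro n
    refine le_trans ?_ (hsum n)
    have hsub : {x | ∃ i, x ∈ D n i ∧ ω (D n i) ≤ EMetric.diam (D n i) ^ t}
        ⊆ ⋃ i, (if ω (D n i) ≤ EMetric.diam (D n i) ^ t then D n i else ∅) := by
      rintro x ⟨i, hx, hi⟩
      refine Set.mem_iUnion.2 ⟨i, ?_⟩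
      rw [if_pos hi]
      exact hx
    refine (measure_mono hsub).trans ((measure_iUnion_le _).trans ?_)
    refine ENNReal.tsum_le_tsum fun i => ?_
    split_ifs <;> simp
  have hfin : (∑' n, ω {x | ∃ i, x ∈ D n i ∧ ω (D n i) ≤ EMetric.diam (D n i) ^ t}) ≠ ∞ := by
    refine ne_top_of_le_ne_top ?_ (ENNReal.tsum_le_tsum hB)
    exact ((summable_geometric_of_lt_one hγ0.le hγ1).mul_left C).tsum_ofReal_ne_top
  refine measure_mono_null ?_ (measure_setOf_frequently_eq_zero hfin)
  rintro x ⟨hx, r, hr, h⟩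
  have hev := hdiam.eventually (gt_mem_nhds (ENNReal.ofReal_pos.2 hr))
  refine Eventually.frequently (hev.mono fun n hn => ?_)
  rw [← hcover n] at hx
  obtain ⟨i, hi⟩ := Set.mem_iUnion.1 hx
  exact ⟨i, hi, h n i hi ((le_iSup (fun i => EMetric.diam (D n i)) i).trans_lt hn)⟩
end

section
/- Let ω be a finite Borel measure on a metric space X, let Q₀ ⊆ X be a Borel set, and let (𝒟_n)_{n∈ℕ} be a sequence of countable Borel partitions of Q₀ such that every element of 𝒟_{n+1} is contained in some element of 𝒟_n, and sup_{Q∈𝒟_n} diam Q → 0 as n → ∞. Let t > 0 and let F ⊆ Q₀ be a set such that for every x ∈ F and every r > 0 there exist n ∈ ℕ and Q ∈ 𝒟_n with x ∈ Q, diam Q < r and (diam Q)^t ≤ 2·ω(Q). Then H^t(F) ≤ 2·ω(Q₀), where H^t denotes t-dimensional Hausdorff measure on X. -/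
open MeasureTheory Filter
open scoped ENNReal

/-- a Vitali-type covering bound: if every point of `F` lies in
arbitrarily small partition cells `Q` with `(diam Q)^t ≤ 2 ω(Q)`, then
`H^t(F) ≤ 2 ω(Q₀)`. -/
theorem stmt10 {X : Type*} [MetricSpace X] [MeasurableSpace X] [BorelSpace X]
    (ω : Measure X) [IsFiniteMeasure ω]
    (Q₀ : Set X) (hQ₀ : MeasurableSet Q₀)
    (D : ℕ → ℕ → Set X)
    (hmeas : ∀ n i, MeasurableSet (D n i))
    (hdisj : ∀ n, Pairwise (Function.onFun Disjoint (D n)))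
    (hcover : ∀ n, (⋃ i, D n i) = Q₀)
    (hnested : ∀ n i, ∃ i', D (n + 1) i ⊆ D n i')
    (hdiam : Tendsto (fun n => ⨆ i, EMetric.diam (D n i)) atTop (nhds 0))
    (t : ℝ) (ht : 0 < t)
    (F : Set X) (hFQ₀ : F ⊆ Q₀)
    (hsel : ∀ x ∈ F, ∀ r : ℝ, 0 < r → ∃ n i, x ∈ D n i ∧
      EMetric.diam (D n i) < ENNReal.ofReal r ∧
      EMetric.diam (D n i) ^ t ≤ 2 * ω (D n i)) :
    μH[t] F ≤ 2 * ω Q₀ := by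
  classical
  have nest : ∀ m k i, ∃ j, D (m + k) i ⊆ D m j := by
    intro m k
    induction k with
    | zero => intro i; exact ⟨i, subset_rfl⟩
    | succ k ih =>
      intro i
      obtain ⟨i', hi'⟩ := hnested (m + k) i
      obtain ⟨j, hj⟩ := ih i'
      exact ⟨j, hi'.trans hj⟩
  let G : ℕ → ℕ × ℕ → Prop := fun k p =>
    EMetric.diam (D p.1 p.2) < ENNReal.ofReal (1 / ((k : ℝ) + 1)) ∧
      EMetric.diam (D p.1 p.2) ^ t ≤ 2 * ω (D p.1 p.2)
  let S : ℕ → Set (ℕ × ℕ) := fun k =>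
    {p | G k p ∧ ∀ q, G k q → q.1 < p.1 → ¬ D p.1 p.2 ⊆ D q.1 q.2}
  have key : ∀ k (p q : S k), p.1.1 < q.1.1 →
      Disjoint (D p.1.1 p.1.2) (D q.1.1 q.1.2) := by
    intro k p q hlt
    obtain ⟨j, hj⟩ := nest p.1.1 (q.1.1 - p.1.1) q.1.2
    rw [Nat.add_sub_cancel' hlt.le] at hj
    have hne : p.1.2 ≠ j := by
      intro h
      rw [← h] at hj
      exact q.2.2 p.1 p.2.1 hlt hj
    exact (hdisj p.1.1 hne).mono_right hj
  have disj : ∀ k, Pairwise (Function.onFun Disjoint (fun p : S k => D p.1.1 p.1.2)) := by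
    intro k p q hpq
    rcases lt_trichotomy p.1.1 q.1.1 with h | h | h
    · exact key k p q h
    · have hne : p.1.2 ≠ q.1.2 := fun h2 => hpq (Subtype.ext (Prod.ext h h2))
      have := hdisj p.1.1 hne
      simp only [Function.onFun] at this ⊢
      rw [← h]
      exact this
    · exact (key k q p h).symm
  have cov : ∀ k, F ⊆ ⋃ p : S k, D p.1.1 p.1.2 := by
    intro k x hx
    have hex : ∃ n, ∃ i, x ∈ D n i ∧ G k (n, i) := by
      obtain ⟨n, i, h1, h2, h3⟩ := hsel x hx (1 / ((k : ℝ) + 1)) (by positivity)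
      exact ⟨n, i, h1, h2, h3⟩
    obtain ⟨i, hxi, hG⟩ := Nat.find_spec hex
    refine Set.mem_iUnion.2 ⟨⟨(Nat.find hex, i), hG, ?_⟩, hxi⟩
    intro q hq hlt hsub
    exact Nat.find_min hex hlt ⟨q.2, hsub hxi, hq⟩
  have bound : ∀ k, ∑' p : S k, EMetric.diam (D p.1.1 p.1.2) ^ t ≤ 2 * ω Q₀ := by
    intro k
    calc ∑' p : S k, EMetric.diam (D p.1.1 p.1.2) ^ t
        ≤ ∑' p : S k, 2 * ω (D p.1.1 p.1.2) := ENNReal.tsum_le_tsum fun p => p.2.1.2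
      _ = 2 * ω (⋃ p : S k, D p.1.1 p.1.2) := by
          rw [ENNReal.tsum_mul_left, measure_iUnion (disj k) fun p => hmeas _ _]
      _ ≤ 2 * ω Q₀ := by
          gcongr
          refine Set.iUnion_subset fun p => ?_
          rw [← hcover p.1.1]
          exact Set.subset_iUnion _ _
  have lim : Tendsto (fun k : ℕ => ENNReal.ofReal (1 / ((k : ℝ) + 1))) atTop (nhds 0) := by
    have := ENNReal.tendsto_ofReal (tendsto_one_div_add_atTop_nhds_zero_nat (𝕜 := ℝ))
    simpa using this
  refine (Measure.hausdorffMeasure_le_liminf_tsum t F _ lim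
    (fun k (p : S k) => D p.1.1 p.1.2) (Eventually.of_forall fun k p => p.2.1.1.le)
    (Eventually.of_forall cov)).trans ?_
  refine (liminf_le_liminf (Eventually.of_forall bound)).trans ?_
  simp
end

section
/- Let n ∈ ℕ, s > 0 and C₁ ≥ 1, and let E ⊆ ℝ^n be Ahlfors s-regular with constant C₁. Then for every 0 < t ≤ s there is a constant c > 0, depending only on n, s, t and C₁, such that H^t_∞(E ∩ B(x,r)) ≥ c·r^t for every x ∈ E and every 0 < r < diam E. -/
open MeasureTheory Metric Filter
open scoped ENNReal NNReal

open MeasureTheory Metric Filter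
open scoped ENNReal

/-- an Ahlfors `s`-regular set has lower `t`-content regular balls for
every `0 < t ≤ s`: `H^t_∞(E ∩ B(x,r)) ≥ c r^t` with `c = c(n,s,t,C₁) > 0`. -/
theorem stmt11 (n : ℕ) (s C₁ : ℝ) (hs : 0 < s) (hC₁ : 1 ≤ C₁)
    (t : ℝ) (ht0 : 0 < t) (hts : t ≤ s) :
    ∃ c : ℝ, 0 < c ∧
      ∀ E : Set (EuclideanSpace ℝ (Fin n)), AhlforsRegular s C₁ E →
        ∀ x ∈ E, ∀ r : ℝ, 0 < r → ENNReal.ofReal r < EMetric.diam E →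
          ENNReal.ofReal (c * r ^ t) ≤ hContent t (E ∩ closedBall x r) := by
  have hC0 : 0 < C₁ := by linarith
  refine ⟨C₁⁻¹ * C₁⁻¹, by positivity, ?_⟩
  intro E hE x hx r hr hrE
  unfold hContent
  refine le_iInf fun U => le_iInf fun hU => ?_
  have hrt : 0 < r ^ t := Real.rpow_pos_of_pos hr t
  have hrst : 0 < r ^ (s - t) := Real.rpow_pos_of_pos hr _
  by_cases hbig : ∃ i, ENNReal.ofReal r ≤ EMetric.diam (U i)
  · obtain ⟨i, hi⟩ := hbig
    have h1 : ENNReal.ofReal (C₁⁻¹ * C₁⁻¹ * r ^ t) ≤ ENNReal.ofReal r ^ t := by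
      rw [ENNReal.ofReal_rpow_of_pos hr]
      apply ENNReal.ofReal_le_ofReal
      have h2 : C₁⁻¹ ≤ 1 := inv_le_one_of_one_le₀ hC₁
      have h3 : 0 < C₁⁻¹ := by positivity
      have h4 : C₁⁻¹ * C₁⁻¹ ≤ 1 := by nlinarith
      nlinarith
    exact h1.trans ((ENNReal.rpow_le_rpow hi ht0.le).trans
      (ENNReal.le_tsum (f := fun i => EMetric.diam (U i) ^ t) i))
  push Not at hbig
  have key : ∀ i, μH[s] (E ∩ closedBall x r ∩ U i) ≤
      ENNReal.ofReal (C₁ * r ^ (s - t)) * EMetric.diam (U i) ^ t := by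
    intro i
    rcases Set.eq_empty_or_nonempty (E ∩ closedBall x r ∩ U i) with h0 | ⟨y, ⟨hyE, _⟩, hyU⟩
    · rw [h0]; simp
    have hfin : EMetric.diam (U i) ≠ ⊤ := (hbig i).ne_top
    have hsub : ∀ z ∈ U i, dist z y ≤ (EMetric.diam (U i)).toReal := by
      intro z hz
      rw [dist_edist]
      exact ENNReal.toReal_mono hfin (EMetric.edist_le_diam_of_mem hz hyU)
    rcases eq_or_ne (EMetric.diam (U i)) 0 with hd | hd
    · have : E ∩ closedBall x r ∩ U i ⊆ {y} := by
        rintro z ⟨_, hz⟩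
        have := hsub z hz
        rw [hd] at this
        simpa using this
      have hle := measure_mono (μ := μH[s]) this
      have : NullSingletonClass (μH[s] : Measure (EuclideanSpace ℝ (Fin n))) :=
        Measure.nullSingletonClass_hausdorff _ hs
      rw [measure_singleton] at hle
      exact hle.trans bot_le
    · set d := (EMetric.diam (U i)).toReal with hdd
      have hdpos : 0 < d := ENNReal.toReal_pos hd hfin
      have hde : EMetric.diam (U i) = ENNReal.ofReal d := (ENNReal.ofReal_toReal hfin).symm
      have hdr : d < r := by
        have := hbig i
        rw [hde] at this
        exact (ENNReal.ofReal_lt_ofReal_iff hr).1 this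
      have h1 := (hE y hyE d hdpos (by rw [← hde]; exact (hbig i).trans hrE)).2
      refine (measure_mono ?_).trans (h1.trans ?_)
      · rintro z ⟨⟨hzE, _⟩, hz⟩
        exact ⟨hzE, hsub z hz⟩
      · rw [hde, ENNReal.ofReal_rpow_of_pos hdpos, ← ENNReal.ofReal_mul (by positivity)]
        apply ENNReal.ofReal_le_ofReal
        have h2 : d ^ s = d ^ (s - t) * d ^ t := by
          rw [← Real.rpow_add hdpos]; ring_nf
        have h3 : d ^ (s - t) ≤ r ^ (s - t) :=
          Real.rpow_le_rpow hdpos.le hdr.le (by linarith)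
        rw [h2, mul_assoc]
        gcongr
  have hlow := (hE x hx r hr hrE).1
  have hsum : ENNReal.ofReal (C₁⁻¹ * r ^ s) ≤
      ENNReal.ofReal (C₁ * r ^ (s - t)) * ∑' i, EMetric.diam (U i) ^ t := by
    refine hlow.trans ?_
    rw [← ENNReal.tsum_mul_left]
    refine le_trans ?_ (ENNReal.tsum_le_tsum key)
    refine le_trans (measure_mono ?_) (measure_iUnion_le _)
    rw [← Set.inter_iUnion]
    exact Set.subset_inter le_rfl hU
  have hA : 0 < C₁ * r ^ (s - t) := by positivity
  have heq : C₁⁻¹ * r ^ s = (C₁ * r ^ (s - t)) * (C₁⁻¹ * C₁⁻¹ * r ^ t) := by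
    have h2 : r ^ s = r ^ (s - t) * r ^ t := by
      rw [← Real.rpow_add hr]; ring_nf
    rw [h2]; field_simp
  rw [heq, ENNReal.ofReal_mul hA.le] at hsum
  exact (ENNReal.mul_le_mul_iff_right (by simpa using hA) ENNReal.ofReal_ne_top).1 hsum
end

section
/- Let d ∈ ℕ, s > d and c₀ > 0. There exists β > 0, depending only on d, s and c₀, such that whenever E ⊆ ℝ^{d+1}, x ∈ ℝ^{d+1} and r > 0 satisfy H^s_∞(E ∩ B(x,r)) ≥ c₀·r^s, one has bβ_E(x,r) ≥ β. -/
open MeasureTheory Metric Filter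
open scoped ENNReal NNReal

open MeasureTheory Metric Filter
open scoped ENNReal

lemma hContent_le_aux {n : ℕ} {s : ℝ} (hs : 0 < s) {ι : Type} [Fintype ι] [Encodable ι]
    (A : Set (EuclideanSpace ℝ (Fin n))) (U : ι → Set (EuclideanSpace ℝ (Fin n)))
    (hA : A ⊆ ⋃ i, U i) (D : ℝ≥0∞) (hD : ∀ i, EMetric.diam (U i) ≤ D) :
    hContent s A ≤ (Fintype.card ι : ℝ≥0∞) * D ^ s := by
  have h0 : (fun S : Set (EuclideanSpace ℝ (Fin n)) => EMetric.diam S ^ s) ∅ = 0 := by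
    simp [EMetric.diam, ENNReal.zero_rpow_of_pos hs]
  unfold hContent
  refine (iInf₂_le (fun k => ⋃ b ∈ Encodable.decode₂ ι k, U b) ?_).trans ?_
  · rwa [Encodable.iUnion_decode₂]
  · have := tsum_iUnion_decode₂ (fun S : Set (EuclideanSpace ℝ (Fin n)) => EMetric.diam S ^ s) h0 U
    rw [this, tsum_fintype]
    refine (Finset.sum_le_sum (g := fun _ => D ^ s) fun i _ => ?_).trans ?_
    · exact ENNReal.rpow_le_rpow (hD i) hs.le
    · simp

lemma norm_le_coords_aux {d : ℕ} {F : Type*} [NormedAddCommGroup F] [InnerProductSpace ℝ F]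
    (W : Submodule ℝ F) (b : OrthonormalBasis (Fin d) ℝ W) (v : F) (hv : v ∈ W) (a : ℝ)
    (ha : ∀ i, |inner ℝ (b i : F) v| ≤ a) : ‖v‖ ≤ d * a := by
  have h := b.sum_repr' (⟨v, hv⟩ : W)
  have h2 : ‖(⟨v, hv⟩ : W)‖ ≤ ∑ _i : Fin d, a := by
    rw [← h]
    refine norm_sum_le_of_le _ fun i _ => ?_
    rw [norm_smul, b.norm_eq_one, mul_one]
    exact ha i
  simpa using h2

lemma dist_aux {d : ℕ} {F : Type*} [NormedAddCommGroup F] [InnerProductSpace ℝ F]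
    (V : AffineSubspace ℝ F) (b : OrthonormalBasis (Fin d) ℝ V.direction) (y y' : F) (δ : ℝ)
    (hne : (V : Set F).Nonempty)
    (hy : infDist y V < δ) (hy' : infDist y' V < δ)
    (hc : ∀ i, |inner ℝ (b i : F) (y - y')| ≤ 2 * δ) : dist y y' ≤ (2 + 4 * d) * δ := by
  obtain ⟨p, hp, hpd⟩ := (infDist_lt_iff hne).1 hy
  obtain ⟨p', hp', hpd'⟩ := (infDist_lt_iff hne).1 hy'
  have hv : p - p' ∈ V.direction := AffineSubspace.vsub_mem_direction hp hp'
  rw [dist_eq_norm] at hpd hpd'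
  have h1 : ‖p - p'‖ ≤ d * (4 * δ) := by
    refine norm_le_coords_aux _ b _ hv _ fun i => ?_
    have e : p - p' = (y - y') - (y - p) + (y' - p') := by abel
    have n1 : ‖(b i : F)‖ = 1 := b.norm_eq_one i
    have i1 := abs_real_inner_le_norm (b i : F) (y - p)
    have i2 := abs_real_inner_le_norm (b i : F) (y' - p')
    rw [n1, one_mul] at i1 i2
    rw [e, inner_add_right, inner_sub_right]
    have := hc i
    rw [abs_le] at *
    constructor <;> linarith
  rw [dist_eq_norm]
  have e : y - y' = (y - p) + (p - p') - (y' - p') := by abel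
  have := norm_sub_le ((y - p) + (p - p')) (y' - p')
  have := norm_add_le (y - p) (p - p')
  rw [e]
  linarith

lemma content_aux {d : ℕ} {s : ℝ} (hs : 0 < s) (A : Set (EuclideanSpace ℝ (Fin (d+1))))
    (x : EuclideanSpace ℝ (Fin (d+1))) (r : ℝ) (hr : 0 < r) (hA : A ⊆ closedBall x r)
    (V : AffineSubspace ℝ (EuclideanSpace ℝ (Fin (d+1))))
    (hne : (V : Set (EuclideanSpace ℝ (Fin (d+1)))).Nonempty)
    (hV : Module.finrank ℝ V.direction = d) (N : ℕ) (hN : 0 < N)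
    (hd : ∀ y ∈ A, infDist y (V : Set (EuclideanSpace ℝ (Fin (d+1)))) < r / N) :
    hContent s A ≤ ((N + 1 : ℕ) ^ d : ℕ) * ENNReal.ofReal ((2 + 4 * d) * (r / N)) ^ s := by
  let b : OrthonormalBasis (Fin d) ℝ V.direction :=
    (stdOrthonormalBasis ℝ V.direction).reindex (finCongr hV)
  have hN' : (0:ℝ) < N := by exact_mod_cast hN
  let c : EuclideanSpace ℝ (Fin (d+1)) → Fin d → ℝ := fun y i =>
    (inner ℝ (b i : EuclideanSpace ℝ (Fin (d+1))) (y - x) + r) / (2 * r) * N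
  let U : (Fin d → Fin (N+1)) → Set (EuclideanSpace ℝ (Fin (d+1))) := fun k =>
    {y | y ∈ A ∧ ∀ i, ⌊c y i⌋₊ = (k i : ℕ)}
  have hc : ∀ y ∈ A, ∀ i, 0 ≤ c y i ∧ c y i ≤ N := by
    intro y hy i
    have n1 : ‖(b i : EuclideanSpace ℝ (Fin (d+1)))‖ = 1 := b.norm_eq_one i
    have i1 := abs_real_inner_le_norm (b i : EuclideanSpace ℝ (Fin (d+1))) (y - x)
    have hyx := mem_closedBall.1 (hA hy)
    rw [dist_eq_norm] at hyx
    rw [n1, one_mul] at i1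
    have i2 := abs_le.1 (i1.trans hyx)
    constructor
    · refine mul_nonneg (div_nonneg ?_ ?_) hN'.le <;> linarith [i2.1]
    · refine mul_le_of_le_one_left hN'.le ?_
      rw [div_le_one (by linarith)]
      linarith [i2.2]
  have := hContent_le_aux hs A U ?_ (ENNReal.ofReal ((2 + 4 * d) * (r / N))) ?_
  · simpa using this
  · intro y hy
    refine Set.mem_iUnion.2 ⟨fun i => ⟨⌊c y i⌋₊, ?_⟩, hy, fun i => rfl⟩
    rw [Nat.lt_succ_iff]
    exact Nat.floor_le_of_le (hc y hy i).2
  · intro k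
    refine Metric.ediam_le fun y hy y' hy' => ?_
    rw [edist_dist]
    refine ENNReal.ofReal_le_ofReal ?_
    refine dist_aux V b y y' (r / N) hne (hd y hy.1) (hd y' hy'.1) fun i => ?_
    have f1 := Nat.floor_le (hc y hy.1 i).1
    have f2 := Nat.lt_floor_add_one (c y i)
    have f1' := Nat.floor_le (hc y' hy'.1 i).1
    have f2' := Nat.lt_floor_add_one (c y' i)
    rw [hy.2 i] at f1 f2
    rw [hy'.2 i] at f1' f2'
    have e : inner ℝ (b i : EuclideanSpace ℝ (Fin (d+1))) (y - y')
        = (c y i - c y' i) * (2 * (r / N)) := by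
      have e1 : y - y' = (y - x) - (y' - x) := by abel
      rw [e1, inner_sub_right]
      simp only [c]
      field_simp
      ring
    rw [e, abs_mul, abs_of_pos (show 0 < 2 * (r / N) by positivity)]
    refine mul_le_of_le_one_left (by positivity) ?_
    rw [abs_le]
    constructor <;> linarith

lemma exists_N_aux (d : ℕ) (s : ℝ) (hs : (d : ℝ) < s) (c₀ : ℝ) (hc₀ : 0 < c₀) :
    ∃ N : ℕ, 0 < N ∧ ∀ r : ℝ, 0 < r →
      (((N + 1 : ℕ) ^ d : ℕ) : ℝ) * ((2 + 4 * d) * (r / N)) ^ s < c₀ * r ^ s := by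
  have ht : Tendsto (fun N : ℕ => 2 ^ d * (2 + 4 * (d:ℝ)) ^ s * (N : ℝ) ^ (-(s - d))) atTop
      (nhds (2 ^ d * (2 + 4 * (d:ℝ)) ^ s * 0)) :=
    ((tendsto_rpow_neg_atTop (sub_pos.2 hs)).comp tendsto_natCast_atTop_atTop).const_mul _
  rw [mul_zero] at ht
  obtain ⟨N, h1, h2⟩ := ((ht.eventually (gt_mem_nhds hc₀)).and (eventually_gt_atTop 0)).exists
  refine ⟨N, h2, fun r hr => ?_⟩
  have hN' : (1:ℝ) ≤ N := by exact_mod_cast h2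
  have hN0 : (0:ℝ) < N := by linarith
  have hrs : 0 < r ^ s := Real.rpow_pos_of_pos hr s
  refine lt_of_le_of_lt ?_ (mul_lt_mul_of_pos_right h1 hrs)
  rw [Real.mul_rpow (by positivity) (by positivity), Real.div_rpow hr.le hN0.le, neg_sub,
    Real.rpow_sub hN0, Real.rpow_natCast]
  have h3 : (((N + 1 : ℕ) ^ d : ℕ) : ℝ) ≤ 2 ^ d * (N:ℝ) ^ d := by
    push_cast
    rw [← mul_pow]
    exact pow_le_pow_left₀ (by positivity) (by linarith) _
  calc _ ≤ (2 ^ d * (N:ℝ) ^ d) * ((2 + 4 * (d:ℝ)) ^ s * (r ^ s / (N:ℝ) ^ s)) := by gcongr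
    _ = _ := by ring

/-- if `s > d` and `H^s_∞(E ∩ B(x,r)) ≥ c₀ r^s`, then `E` is uniformly
non-flat in `B(x,r)`: `bβ_E(x,r) ≥ β` with `β = β(d,s,c₀) > 0`. -/
theorem stmt12 (d : ℕ) (s : ℝ) (hs : (d : ℝ) < s) (c₀ : ℝ) (hc₀ : 0 < c₀) :
    ∃ β : ℝ, 0 < β ∧
      ∀ (E : Set (EuclideanSpace ℝ (Fin (d+1))))
        (x : EuclideanSpace ℝ (Fin (d+1))) (r : ℝ), 0 < r →
        ENNReal.ofReal (c₀ * r ^ s) ≤ hContent s (E ∩ closedBall x r) →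
        β ≤ bbeta d E x r := by
  have hs0 : 0 < s := lt_of_le_of_lt (Nat.cast_nonneg d) hs
  obtain ⟨N, hN, hNr⟩ := exists_N_aux d s hs c₀ hc₀
  have hN' : (0:ℝ) < N := by exact_mod_cast hN
  refine ⟨1 / N, by positivity, fun E x r hr hE => ?_⟩
  unfold bbeta
  refine le_csInf ?_ ?_
  · obtain ⟨W, hW⟩ : ∃ W : Submodule ℝ (EuclideanSpace ℝ (Fin (d+1))),
        Module.finrank ℝ W = d := by
      have h : d ≤ Module.finrank ℝ (EuclideanSpace ℝ (Fin (d+1))) := by simp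
      obtain ⟨f, hf⟩ := exists_linearIndependent_of_le_finrank h
      exact ⟨_, by simpa using finrank_span_eq_card hf⟩
    exact ⟨_, AffineSubspace.mk' 0 W, ⟨0, AffineSubspace.self_mem_mk' 0 W⟩, by rw [AffineSubspace.direction_mk']; exact hW, rfl⟩
  · rintro t ⟨V, hne, hV, rfl⟩
    by_contra hlt
    rw [not_le] at hlt
    have hsnd : 0 ≤ sSup ((fun y => infDist y E) ''
          ((V : Set (EuclideanSpace ℝ (Fin (d+1)))) ∩ closedBall x r)) / r := by
      refine div_nonneg (Real.sSup_nonneg ?_) hr.le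
      rintro _ ⟨y, -, rfl⟩
      exact infDist_nonneg
    have hfst : sSup ((fun y => infDist y (V : Set (EuclideanSpace ℝ (Fin (d+1))))) ''
          (E ∩ closedBall x r)) < r / N := by
      have : sSup ((fun y => infDist y (V : Set (EuclideanSpace ℝ (Fin (d+1))))) ''
          (E ∩ closedBall x r)) / r < 1 / N := by linarith
      rw [div_lt_iff₀ hr] at this
      rwa [one_div_mul_eq_div] at this
    have hbdd : BddAbove ((fun y => infDist y (V : Set (EuclideanSpace ℝ (Fin (d+1))))) ''
          (E ∩ closedBall x r)) := by
      refine ((isCompact_closedBall x r).image (continuous_infDist_pt (V : Set (EuclideanSpace ℝ (Fin (d+1)))))).bddAbove.mono ?_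
      exact Set.image_mono Set.inter_subset_right
    have hcon := content_aux hs0 (E ∩ closedBall x r) x r hr Set.inter_subset_right V hne hV N hN
      (fun y hy => lt_of_le_of_lt (le_csSup hbdd ⟨y, hy, rfl⟩) hfst)
    have h := hE.trans hcon
    rw [ENNReal.ofReal_rpow_of_nonneg (by positivity) hs0.le, ← ENNReal.ofReal_natCast,
      ← ENNReal.ofReal_mul (by positivity), ENNReal.ofReal_le_ofReal_iff (by positivity)] at h
    exact absurd h (not_le.2 (hNr r hr))
end

section
/- Let d ∈ ℕ, C₁ ≥ 1 and δ₀ > 0, let s_j ∈ (0, d+1] be a sequence with s_j → s > 0, and let Σ_j ⊆ B(0,10) ⊆ ℝ^{d+1} be nonempty compact sets with diam Σ_j ≥ δ₀, each Ahlfors s_j-regular with constant C₁, converging in the Hausdorff metric to a compact set Σ. Then there is a constant C ≥ 1, depending only on d, C₁, s and δ₀, such that C⁻¹ r^s ≤ H^s(Σ ∩ B(x,r)) ≤ C r^s for all x ∈ Σ and 0 < r < diam Σ. -/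
open MeasureTheory Metric Filter
open scoped ENNReal NNReal

open MeasureTheory Metric Filter
open scoped ENNReal

section helpers
open Set Topology

lemma aux_net {X : Type*} [MetricSpace X] {A : Set X} (hA : IsCompact A) {ε : ℝ} (hε : 0 < ε) :
    ∃ F : Finset X, (F : Set X) ⊆ A ∧ (∀ a ∈ F, ∀ b ∈ F, a ≠ b → ε < dist a b) ∧
      A ⊆ ⋃ a ∈ F, closedBall a ε := by
  lift ε to ℝ≥0 using hε.le
  have hε' : (ε / 2 : ℝ≥0) ≠ 0 := by
    have : 0 < ε := by exact_mod_cast hε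
    positivity
  have hp : packingNumber ε A ≠ ⊤ := by
    obtain ⟨N, hNA, hNf, hN⟩ := exists_finite_isCover_of_isCompact hε' hA
    have h1 := packingNumber_two_mul_le_externalCoveringNumber (ε / 2) A
    have h2 : 2 * (ε / 2) = ε := by
      rw [mul_div_cancel₀]; norm_num
    rw [h2] at h1
    exact ne_top_of_le_ne_top (Set.encard_ne_top_iff.2 hNf)
      (h1.trans hN.externalCoveringNumber_le_encard)
  have hfin : (maximalSeparatedSet ε A).Finite := by
    rw [← Set.encard_ne_top_iff, encard_maximalSeparatedSet hp]; exact hp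
  refine ⟨hfin.toFinset, ?_, ?_, ?_⟩
  · simpa using maximalSeparatedSet_subset
  · intro a ha b hb hab
    have := isSeparated_maximalSeparatedSet (ε := ε) (A := A) (by simpa using ha)
      (by simpa using hb) hab
    simp only [edist_nndist, ENNReal.coe_lt_coe] at this
    exact_mod_cast this
  · have := isCover_iff_subset_iUnion_closedBall.1 (isCover_maximalSeparatedSet hp)
    simpa using this

lemma aux_tendsto_rpow {sj : ℕ → ℝ} {s : ℝ} (h : Tendsto sj atTop (𝓝 s)) {a : ℝ} (ha : 0 < a) :
    Tendsto (fun j => a ^ sj j) atTop (𝓝 (a ^ s)) :=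
  (Real.continuous_const_rpow ha.ne').continuousAt.tendsto.comp h

lemma aux_card {X : Type*} [MetricSpace X] [MeasurableSpace X] [BorelSpace X]
    {t K C₁ : ℝ} (hC₁ : 0 < C₁) {E : Set X} (hE : IsCompact E)
    {F : Finset X} {ε r : ℝ} (hε : 0 < ε) (hεr : ε ≤ r) {x : X} (hK : 0 ≤ K)
    (hx : x ∈ E) (hup : μH[t] (E ∩ closedBall x (4 * r)) ≤ ENNReal.ofReal (K * (4 * r) ^ t))
    (hlo : ∀ y ∈ E, ENNReal.ofReal (C₁⁻¹ * (ε / 8) ^ t) ≤ μH[t] (E ∩ closedBall y (ε / 8)))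
    (hsep : ∀ a ∈ F, ∀ b ∈ F, a ≠ b → ε < dist a b)
    (hF : ∀ a ∈ F, dist a x ≤ 2 * r)
    (happ : ∀ a ∈ F, ∃ y ∈ E, dist a y < ε / 4) :
    (F.card : ℝ) * (C₁⁻¹ * (ε / 8) ^ t) ≤ K * (4 * r) ^ t := by
  choose! y hyE hy using happ
  have hr : 0 < r := hε.trans_le hεr
  have h1 : ∑ a ∈ F, μH[t] (E ∩ closedBall (y a) (ε / 8)) =
      μH[t] (⋃ a ∈ F, E ∩ closedBall (y a) (ε / 8)) := by
    rw [measure_biUnion_finset]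
    · intro a ha b hb hab
      rw [Function.onFun, Set.disjoint_left]
      rintro z ⟨-, hz1⟩ ⟨-, hz2⟩
      have := hsep a ha b hb hab
      have h3 := hy a ha
      have h4 := hy b hb
      rw [mem_closedBall] at hz1 hz2
      have := dist_triangle4 a (y a) (y b) b
      have := dist_triangle_left (y a) (y b) z
      rw [dist_comm] at h4
      linarith
    · intro a _
      exact hE.measurableSet.inter measurableSet_closedBall
  have h2 : μH[t] (⋃ a ∈ F, E ∩ closedBall (y a) (ε / 8)) ≤ μH[t] (E ∩ closedBall x (4 * r)) := by
    apply measure_mono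
    refine iUnion₂_subset fun a ha => inter_subset_inter_right _ ?_
    apply closedBall_subset_closedBall'
    have := hF a ha
    have := hy a ha
    have := dist_triangle_left (y a) x a
    linarith
  have h3 : ∑ a ∈ F, ENNReal.ofReal (C₁⁻¹ * (ε / 8) ^ t) ≤ ENNReal.ofReal (K * (4 * r) ^ t) :=
    (Finset.sum_le_sum fun a ha => hlo (y a) (hyE a ha)).trans (h1.le.trans (h2.trans hup))
  rw [Finset.sum_const, nsmul_eq_mul, ← ENNReal.ofReal_natCast, ← ENNReal.ofReal_mul (by positivity),
    ENNReal.ofReal_le_ofReal_iff (by positivity)] at h3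
  exact h3

lemma aux_upper {X : Type*} [MetricSpace X] [MeasurableSpace X] [BorelSpace X]
    {K C₁ δ₀ s : ℝ} (hC₁ : 0 < C₁) (hK : 0 ≤ K) (hδ₀ : 0 < δ₀) (hs : 0 < s) {sj : ℕ → ℝ}
    (hsj : Tendsto sj atTop (𝓝 s)) {E : ℕ → Set X} {S : Set X} (hE : ∀ j, IsCompact (E j))
    (hS : IsCompact S)
    (hup : ∀ j, ∀ y ∈ E j, ∀ ρ : ℝ, 0 < ρ →
      μH[sj j] (E j ∩ closedBall y ρ) ≤ ENNReal.ofReal (K * ρ ^ sj j))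
    (hlo : ∀ j, ∀ y ∈ E j, ∀ ρ : ℝ, 0 < ρ → ρ < δ₀ →
      ENNReal.ofReal (C₁⁻¹ * ρ ^ sj j) ≤ μH[sj j] (E j ∩ closedBall y ρ))
    (h1 : ∀ η > 0, ∀ᶠ j in atTop, ∀ x ∈ S, ∃ y ∈ E j, dist x y < η)
    {x : X} (hx : x ∈ S) {r : ℝ} (hr : 0 < r) :
    μH[s] (S ∩ closedBall x r) ≤ ENNReal.ofReal (C₁ * K * 64 ^ s * r ^ s) := by
  have hA : IsCompact (S ∩ closedBall x r) := hS.inter_right isClosed_closedBall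
  set ε : ℕ → ℝ := fun n => min r δ₀ * (1 / ((n : ℝ) + 1)) with hεdef
  have hm : 0 < min r δ₀ := lt_min hr hδ₀
  have hε : ∀ n, 0 < ε n := fun n => by positivity
  have hεm : ∀ n, ε n ≤ min r δ₀ := fun n => by
    apply mul_le_of_le_one_right hm.le
    rw [div_le_one (by positivity)]
    linarith [Nat.cast_nonneg (α := ℝ) n]
  choose F hFA hsep hcov using fun n => aux_net hA (hε n)
  have hcard : ∀ n, ((F n).card : ℝ) * (C₁⁻¹ * (ε n / 8) ^ s) ≤ K * (4 * r) ^ s := by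
    intro n
    have hεn := hε n
    have ha : Tendsto (fun j => ((F n).card : ℝ) * (C₁⁻¹ * (ε n / 8) ^ sj j)) atTop
        (𝓝 (((F n).card : ℝ) * (C₁⁻¹ * (ε n / 8) ^ s))) :=
      ((aux_tendsto_rpow hsj (by positivity)).const_mul _).const_mul _
    have hb : Tendsto (fun j => K * (4 * r) ^ sj j) atTop (𝓝 (K * (4 * r) ^ s)) :=
      (aux_tendsto_rpow hsj (by positivity)).const_mul _
    refine le_of_tendsto_of_tendsto ha hb ?_
    have h8 : 0 < ε n / 8 := by positivity
    have h8' : ε n / 8 < δ₀ := by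
      have := (hεm n).trans (min_le_right _ _); linarith
    filter_upwards [h1 r hr, h1 (ε n / 4) (by positivity)] with j hj1 hj2
    obtain ⟨x', hx', hxx'⟩ := hj1 x hx
    refine aux_card hC₁ (hE j) (hε n) ((hεm n).trans (min_le_left _ _)) hK hx'
      (hup j x' hx' _ (by positivity)) (fun y hy => hlo j y hy _ h8 h8') (hsep n) ?_ ?_
    · intro a ha
      have h3 := (hFA n ha).2
      rw [mem_closedBall] at h3
      have := dist_triangle a x x'
      linarith
    · intro a ha
      exact hj2 a (hFA n ha).1
  have hdiam : ∀ n (i : F n), ediam (closedBall (i : X) (ε n)) ≤ ENNReal.ofReal (2 * ε n) := by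
    intro n i
    refine Metric.ediam_le fun a ha b hb => ?_
    rw [edist_dist]
    apply ENNReal.ofReal_le_ofReal
    rw [mem_closedBall] at ha hb
    have := dist_triangle_right a b (i : X)
    linarith
  have hlim : Tendsto (fun n => ENNReal.ofReal (2 * ε n)) atTop (𝓝 0) := by
    have h0 : Tendsto (fun n => 2 * ε n) atTop (𝓝 0) := by
      have := ((tendsto_one_div_add_atTop_nhds_zero_nat (𝕜 := ℝ)).const_mul (min r δ₀)).const_mul 2
      simpa [hεdef] using this
    simpa using ENNReal.tendsto_ofReal h0
  refine (Measure.hausdorffMeasure_le_liminf_sum (ι := fun n => F n) s (S ∩ closedBall x r)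
    (fun n => ENNReal.ofReal (2 * ε n)) hlim (fun n i => closedBall (i : X) (ε n))
    (Eventually.of_forall fun n i => hdiam n i) (Eventually.of_forall fun n => ?_)).trans ?_
  · intro z hz
    have := hcov n hz
    simp only [mem_iUnion] at this ⊢
    obtain ⟨a, ha, hza⟩ := this
    exact ⟨⟨a, ha⟩, hza⟩
  · have hb : ∀ n, ∑ i : F n, ediam (closedBall (i : X) (ε n)) ^ s ≤
        ENNReal.ofReal (C₁ * K * 64 ^ s * r ^ s) := by
      intro n
      have hεn := hε n
      calc ∑ i : F n, ediam (closedBall (i : X) (ε n)) ^ s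
          ≤ ∑ i : F n, ENNReal.ofReal ((2 * ε n) ^ s) := by
            refine Finset.sum_le_sum fun i _ => ?_
            rw [← ENNReal.ofReal_rpow_of_nonneg (by positivity) hs.le]
            exact ENNReal.rpow_le_rpow (hdiam n i) hs.le
        _ = ENNReal.ofReal ((F n).card * (2 * ε n) ^ s) := by
            rw [Finset.sum_const, nsmul_eq_mul, ENNReal.ofReal_mul (by positivity),
              ENNReal.ofReal_natCast]
            simp
        _ ≤ _ := by
            apply ENNReal.ofReal_le_ofReal
            have e1 : (2 * ε n) ^ s = (ε n / 8) ^ s * 16 ^ s := by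
              rw [← Real.mul_rpow (by positivity) (by positivity)]; congr 1; ring
            have e2 : (64 : ℝ) ^ s * r ^ s = (4 * r) ^ s * 16 ^ s := by
              rw [← Real.mul_rpow (by positivity) (by positivity),
                ← Real.mul_rpow (by positivity) (by positivity)]; congr 1; ring
            calc ((F n).card : ℝ) * (2 * ε n) ^ s
                = C₁ * 16 ^ s * (((F n).card : ℝ) * (C₁⁻¹ * (ε n / 8) ^ s)) := by
                  rw [e1]; field_simp
              _ ≤ C₁ * 16 ^ s * (K * (4 * r) ^ s) :=
                  mul_le_mul_of_nonneg_left (hcard n) (by positivity)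
              _ = C₁ * K * (64 ^ s * r ^ s) := by rw [e2]; ring
              _ = _ := by ring
    calc _ ≤ liminf (fun _ : ℕ => ENNReal.ofReal (C₁ * K * 64 ^ s * r ^ s)) atTop :=
          liminf_le_liminf (Eventually.of_forall hb)
      _ = _ := liminf_const _

lemma aux_lower {X : Type*} [MetricSpace X] [MeasurableSpace X] [BorelSpace X]
    {K C₁ δ₀ s : ℝ} (hC₁ : 0 < C₁) (hK : 0 < K) (hs : 0 < s) {sj : ℕ → ℝ}
    (hsj : Tendsto sj atTop (𝓝 s)) {E : ℕ → Set X} {S : Set X}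
    (hS : IsCompact S)
    (hup : ∀ j, ∀ y ∈ E j, ∀ ρ : ℝ, 0 < ρ →
      μH[sj j] (E j ∩ closedBall y ρ) ≤ ENNReal.ofReal (K * ρ ^ sj j))
    (hlo : ∀ j, ∀ y ∈ E j, ∀ ρ : ℝ, 0 < ρ → ρ < δ₀ →
      ENNReal.ofReal (C₁⁻¹ * ρ ^ sj j) ≤ μH[sj j] (E j ∩ closedBall y ρ))
    (h1 : ∀ η > 0, ∀ᶠ j in atTop, ∀ x ∈ S, ∃ y ∈ E j, dist x y < η)
    (h2 : ∀ η > 0, ∀ᶠ j in atTop, ∀ y ∈ E j, ∃ x ∈ S, dist y x < η)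
    {x : X} (hx : x ∈ S) {r κ : ℝ} (hr : 0 < r) (hκ : 0 < κ) (hκ2 : κ ≤ 1 / 2)
    (hκr : κ * r < δ₀) :
    ENNReal.ofReal (C₁⁻¹ * K⁻¹ * (κ / 2) ^ s * r ^ s) ≤ μH[s] (S ∩ closedBall x r) := by
  have hA : IsCompact (S ∩ closedBall x r) := hS.inter_right isClosed_closedBall
  have hκr0 : 0 < κ * r := by positivity
  have hκr2 : κ * r ≤ r / 2 := by nlinarith
  rw [Measure.hausdorffMeasure_apply]
  refine le_trans ?_ (le_iSup₂ (f := fun (ρ : ℝ≥0∞) (_ : 0 < ρ) =>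
    ⨅ (t : ℕ → Set X) (_ : S ∩ closedBall x r ⊆ ⋃ n, t n) (_ : ∀ n, ediam (t n) ≤ ρ),
      ∑' n, ⨆ _ : (t n).Nonempty, ediam (t n) ^ s) 1 one_pos)
  refine le_iInf fun t => le_iInf fun hcov => le_iInf fun hd => ?_
  refine ENNReal.le_of_forall_pos_le_add fun ε hε _ => ?_
  obtain ⟨e, he0, hesum⟩ := ENNReal.exists_pos_sum_of_countable
    (ε := (ε : ℝ≥0∞)) (by exact_mod_cast hε.ne') ℕ
  have hfin : ∀ n, ediam (t n) ≠ ⊤ := fun n => ne_top_of_le_ne_top ENNReal.one_ne_top (hd n)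
  -- radii
  have hρ : ∀ n, ∃ ρ : ℝ, diam (t n) < ρ ∧ ρ ^ s ≤ diam (t n) ^ s + e n := by
    intro n
    have hc : Tendsto (fun ρ : ℝ => ρ ^ s) (𝓝[>] (diam (t n))) (𝓝 (diam (t n) ^ s)) :=
      ((Real.continuousAt_rpow_const _ _ (Or.inr hs.le)).tendsto).mono_left nhdsWithin_le_nhds
    have hlt : diam (t n) ^ s < diam (t n) ^ s + e n := by
      have : (0 : ℝ) < e n := by exact_mod_cast he0 n
      linarith
    obtain ⟨ρ, hρ1, hρ2⟩ := ((hc.eventually (gt_mem_nhds hlt)).and self_mem_nhdsWithin).exists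
    exact ⟨ρ, hρ2, hρ1.le⟩
  choose ρ hρd hρs using hρ
  have hρ0 : ∀ n, 0 < ρ n := fun n => diam_nonneg.trans_lt (hρd n)
  -- centers
  have hcen : ∀ n, ∃ c : X, t n ⊆ ball c (ρ n) := by
    intro n
    rcases (t n).eq_empty_or_nonempty with h | ⟨c, hc⟩
    · exact ⟨x, by simp [h]⟩
    · refine ⟨c, fun z hz => ?_⟩
      rw [mem_ball]
      exact (dist_le_diam_of_mem' (hfin n) hz hc).trans_lt (hρd n)
  choose c hc using hcen
  obtain ⟨F, hF⟩ := hA.elim_finite_subcover (fun n => ball (c n) (ρ n)) (fun n => isOpen_ball)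
    (hcov.trans (iUnion_mono hc))
  have hopen : IsOpen (⋃ n ∈ F, ball (c n) (ρ n)) :=
    isOpen_biUnion fun n _ => isOpen_ball
  obtain ⟨η, hη, hthick⟩ := hA.exists_thickening_subset_open hopen hF
  -- key real inequality
  have hkey : C₁⁻¹ * (κ * r) ^ s ≤ ∑ n ∈ F, K * (2 * ρ n) ^ s := by
    have ha : Tendsto (fun j => C₁⁻¹ * (κ * r) ^ sj j) atTop (𝓝 (C₁⁻¹ * (κ * r) ^ s)) :=
      (aux_tendsto_rpow hsj hκr0).const_mul _
    have hb : Tendsto (fun j => ∑ n ∈ F, K * (2 * ρ n) ^ sj j) atTop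
        (𝓝 (∑ n ∈ F, K * (2 * ρ n) ^ s)) :=
      tendsto_finsetSum _ fun n _ =>
        (aux_tendsto_rpow hsj (by have := hρ0 n; positivity)).const_mul _
    refine le_of_tendsto_of_tendsto ha hb ?_
    filter_upwards [h1 (r / 4) (by positivity), h2 (min η (r / 4)) (by positivity)] with j hj1 hj2
    obtain ⟨x', hx', hxx'⟩ := hj1 x hx
    have hsub : E j ∩ closedBall x' (κ * r) ⊆ ⋃ n ∈ F, E j ∩ ball (c n) (ρ n) := by
      rintro y ⟨hyE, hy⟩
      obtain ⟨z, hzS, hyz⟩ := hj2 y hyE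
      have hz : y ∈ thickening η (S ∩ closedBall x r) := by
        rw [mem_thickening_iff]
        refine ⟨z, ⟨hzS, ?_⟩, hyz.trans_le (min_le_left _ _)⟩
        have h3 := hyz.trans_le (min_le_right _ _)
        rw [mem_closedBall] at hy ⊢
        have := dist_triangle4 z y x' x
        rw [dist_comm z y, dist_comm x' x] at this
        linarith
      have := hthick hz
      simp only [mem_iUnion] at this ⊢
      obtain ⟨n, hn, hyn⟩ := this
      exact ⟨n, hn, hyE, hyn⟩
    have hpiece : ∀ n ∈ F, μH[sj j] (E j ∩ ball (c n) (ρ n)) ≤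
        ENNReal.ofReal (K * (2 * ρ n) ^ sj j) := by
      intro n _
      rcases (E j ∩ ball (c n) (ρ n)).eq_empty_or_nonempty with h | ⟨y, hyE, hy⟩
      · simp [h]
      · refine (measure_mono (inter_subset_inter_right _ ?_)).trans
          (hup j y hyE (2 * ρ n) (by have := hρ0 n; positivity))
        intro z hz
        rw [mem_ball] at hy hz
        rw [mem_closedBall]
        have := dist_triangle_right z y (c n)
        linarith
    have hfinal : ENNReal.ofReal (C₁⁻¹ * (κ * r) ^ sj j) ≤
        ENNReal.ofReal (∑ n ∈ F, K * (2 * ρ n) ^ sj j) := by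
      rw [ENNReal.ofReal_sum_of_nonneg (fun n _ => by have := hρ0 n; positivity)]
      calc _ ≤ μH[sj j] (E j ∩ closedBall x' (κ * r)) := hlo j x' hx' _ hκr0 hκr
        _ ≤ μH[sj j] (⋃ n ∈ F, E j ∩ ball (c n) (ρ n)) := measure_mono hsub
        _ ≤ ∑ n ∈ F, μH[sj j] (E j ∩ ball (c n) (ρ n)) := measure_biUnion_finset_le _ _
        _ ≤ _ := Finset.sum_le_sum hpiece
    rwa [ENNReal.ofReal_le_ofReal_iff
      (Finset.sum_nonneg fun n _ => by have := hρ0 n; positivity)] at hfinal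
  have hkey2 : C₁⁻¹ * K⁻¹ * (κ / 2) ^ s * r ^ s ≤ ∑ n ∈ F, (diam (t n) ^ s + e n) := by
    have e1 : C₁⁻¹ * K⁻¹ * (κ / 2) ^ s * r ^ s = K⁻¹ * (1 / 2) ^ s * (C₁⁻¹ * (κ * r) ^ s) := by
      have : (κ / 2) ^ s * r ^ s = (1 / 2) ^ s * (κ * r) ^ s := by
        rw [← Real.mul_rpow (by positivity) (by positivity),
          ← Real.mul_rpow (by positivity) (by positivity)]; congr 1; ring
      linear_combination C₁⁻¹ * K⁻¹ * this
    rw [e1]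
    refine (mul_le_mul_of_nonneg_left hkey (by positivity)).trans ?_
    rw [Finset.mul_sum]
    refine Finset.sum_le_sum fun n _ => ?_
    refine le_trans (le_of_eq ?_) (hρs n)
    have hn := hρ0 n
    have : (1 / 2 : ℝ) ^ s * (2 * ρ n) ^ s = ρ n ^ s := by
      rw [← Real.mul_rpow (by positivity) (by positivity)]; congr 1; ring
    rw [← this]; field_simp
  calc ENNReal.ofReal (C₁⁻¹ * K⁻¹ * (κ / 2) ^ s * r ^ s)
      ≤ ENNReal.ofReal (∑ n ∈ F, (diam (t n) ^ s + e n)) := ENNReal.ofReal_le_ofReal hkey2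
    _ = ∑ n ∈ F, ENNReal.ofReal (diam (t n) ^ s + e n) :=
        ENNReal.ofReal_sum_of_nonneg fun n _ => by positivity
    _ ≤ ∑ n ∈ F, ((⨆ _ : (t n).Nonempty, ediam (t n) ^ s) + e n) := by
        refine Finset.sum_le_sum fun n _ => ?_
        rw [ENNReal.ofReal_add (by positivity) (by positivity), ENNReal.ofReal_coe_nnreal]
        gcongr
        rcases (t n).eq_empty_or_nonempty with h | h
        · simp [h, Real.zero_rpow hs.ne']
        · simp only [h, iSup_pos]
          rw [← ENNReal.ofReal_rpow_of_nonneg diam_nonneg hs.le, diam,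
            ENNReal.ofReal_toReal (hfin n)]
    _ ≤ ∑' n, ((⨆ _ : (t n).Nonempty, ediam (t n) ^ s) + e n) := ENNReal.sum_le_tsum _
    _ = (∑' n, ⨆ _ : (t n).Nonempty, ediam (t n) ^ s) + ∑' n, (e n : ℝ≥0∞) := ENNReal.tsum_add
    _ ≤ _ := by gcongr

lemma aux_ofReal_lt {X : Type*} [MetricSpace X] {E : Set X} (hE : IsCompact E) {δ₀ ρ : ℝ}
    (hρ0 : 0 < ρ) (hd : δ₀ ≤ diam E) (hρ : ρ < δ₀) : ENNReal.ofReal ρ < ediam E := by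
  rw [ENNReal.ofReal_lt_iff_lt_toReal hρ0.le hE.isBounded.ediam_ne_top]
  exact hρ.trans_le hd

lemma aux_reg (n : ℕ) (C₁ δ₀ : ℝ) (hC₁ : 1 ≤ C₁) (hδ₀ : 0 < δ₀) :
    ∃ K : ℝ, 1 ≤ K ∧ ∀ (t : ℝ) (E : Set (EuclideanSpace ℝ (Fin n))), 0 < t → IsCompact E →
      E ⊆ closedBall 0 10 → δ₀ ≤ diam E → AhlforsRegular t C₁ E →
      ∀ y ∈ E, ∀ ρ : ℝ, 0 < ρ → μH[t] (E ∩ closedBall y ρ) ≤ ENNReal.ofReal (K * ρ ^ t) := by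
  obtain ⟨F, -, -, hF⟩ := aux_net (isCompact_closedBall (0 : EuclideanSpace ℝ (Fin n)) 10)
    (ε := δ₀ / 4) (by positivity)
  refine ⟨((F.card : ℝ) + 1) * C₁, by nlinarith [Nat.cast_nonneg (α := ℝ) F.card], ?_⟩
  intro t E ht hE hsub hd hreg y hy ρ hρ
  have hc : (0 : ℝ) ≤ F.card := Nat.cast_nonneg _
  rcases lt_or_ge ρ δ₀ with h | h
  · refine (hreg y hy ρ hρ (aux_ofReal_lt hE hρ hd h)).2.trans (ENNReal.ofReal_le_ofReal ?_)
    have : 0 ≤ ρ ^ t := by positivity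
    gcongr
    nlinarith
  · have hcov : E ∩ closedBall y ρ ⊆ ⋃ a ∈ F, E ∩ closedBall a (δ₀ / 4) := by
      rintro z ⟨hz, -⟩
      have := hF (hsub hz)
      simp only [mem_iUnion] at this ⊢
      obtain ⟨a, ha, hza⟩ := this
      exact ⟨a, ha, hz, hza⟩
    have hpiece : ∀ a ∈ F, μH[t] (E ∩ closedBall a (δ₀ / 4)) ≤
        ENNReal.ofReal (C₁ * (δ₀ / 2) ^ t) := by
      intro a _
      rcases (E ∩ closedBall a (δ₀ / 4)).eq_empty_or_nonempty with h | ⟨w, hwE, hw⟩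
      · simp [h]
      · refine (measure_mono (inter_subset_inter_right _ ?_)).trans
          (hreg w hwE (δ₀ / 2) (by positivity)
            (aux_ofReal_lt hE (by positivity) hd (by linarith))).2
        intro z hz
        rw [mem_closedBall] at hw hz ⊢
        have := dist_triangle_right z w a
        linarith
    calc _ ≤ μH[t] (⋃ a ∈ F, E ∩ closedBall a (δ₀ / 4)) := measure_mono hcov
      _ ≤ ∑ a ∈ F, μH[t] (E ∩ closedBall a (δ₀ / 4)) := measure_biUnion_finset_le _ _
      _ ≤ ∑ a ∈ F, ENNReal.ofReal (C₁ * (δ₀ / 2) ^ t) := Finset.sum_le_sum hpiece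
      _ = ENNReal.ofReal (F.card * (C₁ * (δ₀ / 2) ^ t)) := by
          rw [Finset.sum_const, nsmul_eq_mul, ENNReal.ofReal_mul hc, ENNReal.ofReal_natCast]
      _ ≤ _ := by
          apply ENNReal.ofReal_le_ofReal
          have h3 : (δ₀ / 2) ^ t ≤ ρ ^ t :=
            Real.rpow_le_rpow (by positivity) (by linarith) ht.le
          rw [← mul_assoc]
          have : 0 ≤ (δ₀ / 2) ^ t := by positivity
          gcongr
          linarith

end helpers

/-- a Hausdorff limit of uniformly Ahlfors `s_j`-regular compact sets
(with `s_j → s`, uniformly bounded, uniformly non-degenerate) is Ahlfors `s`-regular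
with a constant `C = C(d,C₁,s,δ₀)`. -/
theorem stmt13 (d : ℕ) (C₁ δ₀ s : ℝ) (hC₁ : 1 ≤ C₁) (hδ₀ : 0 < δ₀) (hs : 0 < s) :
    ∃ C : ℝ, 1 ≤ C ∧
      ∀ (sj : ℕ → ℝ) (Sj : ℕ → Set (EuclideanSpace ℝ (Fin (d+1))))
        (S : Set (EuclideanSpace ℝ (Fin (d+1)))),
        (∀ j, 0 < sj j) → (∀ j, sj j ≤ d + 1) → Tendsto sj atTop (nhds s) →
        (∀ j, (Sj j).Nonempty) → (∀ j, IsCompact (Sj j)) →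
        (∀ j, Sj j ⊆ closedBall 0 10) →
        (∀ j, δ₀ ≤ diam (Sj j)) →
        (∀ j, AhlforsRegular (sj j) C₁ (Sj j)) →
        IsCompact S →
        Tendsto (fun j => hausdorffDist (Sj j) S) atTop (nhds 0) →
        ∀ x ∈ S, ∀ r : ℝ, 0 < r → ENNReal.ofReal r < EMetric.diam S →
          ENNReal.ofReal (C⁻¹ * r ^ s) ≤ μH[s] (S ∩ closedBall x r) ∧
          μH[s] (S ∩ closedBall x r) ≤ ENNReal.ofReal (C * r ^ s) := by
  obtain ⟨K, hK, hKreg⟩ := aux_reg (d + 1) C₁ δ₀ hC₁ hδ₀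
  have hC0 : 0 < C₁ := by linarith
  have hK0 : 0 < K := by linarith
  set κ : ℝ := min (1 / 2) (δ₀ / 50) with hκdef
  have hκ : 0 < κ := by positivity
  set c : ℝ := C₁⁻¹ * K⁻¹ * (κ / 2) ^ s with hcdef
  have hc : 0 < c := by positivity
  refine ⟨max 1 (max (C₁ * K * 64 ^ s) c⁻¹), le_max_left _ _, ?_⟩
  intro sj Sj S hsj0 _ hsj hne hcomp hsub hdiam hreg hS hlim x hx r hr hrd
  have hfin : ∀ j, hausdorffEDist (Sj j) S ≠ ⊤ := fun j =>
    hausdorffEDist_ne_top_of_nonempty_of_bounded (hne j) ⟨x, hx⟩ (hcomp j).isBounded hS.isBounded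
  have h2 : ∀ η > 0, ∀ᶠ j in atTop, ∀ y ∈ Sj j, ∃ x ∈ S, dist y x < η := by
    intro η hη
    filter_upwards [hlim.eventually (gt_mem_nhds hη)] with j hj y hy
    exact exists_dist_lt_of_hausdorffDist_lt hy hj (hfin j)
  have h1 : ∀ η > 0, ∀ᶠ j in atTop, ∀ x ∈ S, ∃ y ∈ Sj j, dist x y < η := by
    intro η hη
    filter_upwards [hlim.eventually (gt_mem_nhds hη)] with j hj y hy
    obtain ⟨z, hz, h⟩ := exists_dist_lt_of_hausdorffDist_lt' hy hj (hfin j)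
    exact ⟨z, hz, by rwa [dist_comm]⟩
  have hr22 : r ≤ 22 := by
    obtain ⟨j, hj⟩ := (h1 1 one_pos).exists
    have hS22 : EMetric.diam S ≤ ENNReal.ofReal 22 := by
      refine Metric.ediam_le fun a ha b hb => ?_
      rw [edist_dist]
      apply ENNReal.ofReal_le_ofReal
      obtain ⟨a', ha', haa⟩ := hj a ha
      obtain ⟨b', hb', hbb⟩ := hj b hb
      have h3 := hsub j ha'
      have h4 := hsub j hb'
      rw [mem_closedBall] at h3 h4
      have := dist_triangle4 a a' b' b
      have := dist_triangle_right a' b' 0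
      rw [dist_comm] at hbb
      linarith
    have := hrd.trans_le hS22
    rw [ENNReal.ofReal_lt_ofReal_iff (by norm_num)] at this
    exact this.le
  have hup : ∀ j, ∀ y ∈ Sj j, ∀ ρ : ℝ, 0 < ρ →
      μH[sj j] (Sj j ∩ closedBall y ρ) ≤ ENNReal.ofReal (K * ρ ^ sj j) := fun j =>
    hKreg (sj j) (Sj j) (hsj0 j) (hcomp j) (hsub j) (hdiam j) (hreg j)
  have hlo : ∀ j, ∀ y ∈ Sj j, ∀ ρ : ℝ, 0 < ρ → ρ < δ₀ →
      ENNReal.ofReal (C₁⁻¹ * ρ ^ sj j) ≤ μH[sj j] (Sj j ∩ closedBall y ρ) := fun j y hy ρ h0 hρ =>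
    (hreg j y hy ρ h0 (aux_ofReal_lt (hcomp j) h0 (hdiam j) hρ)).1
  have hκr : κ * r < δ₀ := by
    have : κ ≤ δ₀ / 50 := min_le_right _ _
    nlinarith
  have hrs : 0 ≤ r ^ s := by positivity
  constructor
  · refine le_trans (ENNReal.ofReal_le_ofReal ?_)
      (aux_lower hC0 hK0 hs hsj hS hup hlo h1 h2 hx hr hκ (min_le_left _ _) hκr)
    refine mul_le_mul_of_nonneg_right ?_ hrs
    exact inv_le_of_inv_le₀ hc ((le_max_right _ _).trans (le_max_right _ _))
  · refine (aux_upper hC0 hK0.le hδ₀ hs hsj hcomp hS hup hlo h1 hx hr).trans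
      (ENNReal.ofReal_le_ofReal ?_)
    refine mul_le_mul_of_nonneg_right ?_ hrs
    exact (le_max_left _ _).trans (le_max_right _ _)
end

section
/- Let n ∈ ℕ, M > 0, let U ⊆ ℝ^n be open, let (μ_j) be a sequence of finite Borel measures on ℝ^n converging weakly to a finite Borel measure μ, and let s_j > 0 be a sequence with s_j → s > 0. Suppose that for every j and every closed ball B(x,ρ) ⊆ U with ρ ≥ 1/j one has μ_j(B(x,ρ)) ≤ M·ρ^{s_j}. Then μ(B(x,ρ)) ≤ M·ρ^s for every closed ball B(x,ρ) ⊆ U. -/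
open MeasureTheory Metric Filter
open scoped ENNReal BoundedContinuousFunction

/-- uniform Frostman-type upper bounds at scales `ρ ≥ 1/j` (with
exponents `s_j → s`) pass to the weak limit: the limit measure satisfies
`μ(B(x,ρ)) ≤ M ρ^s` for every closed ball `B(x,ρ) ⊆ U`. -/
theorem stmt14 (n : ℕ) (M : ℝ) (hM : 0 < M)
    (U : Set (EuclideanSpace ℝ (Fin n))) (hU : IsOpen U)
    (μ : ℕ → Measure (EuclideanSpace ℝ (Fin n)))
    (ν : Measure (EuclideanSpace ℝ (Fin n)))
    [∀ j, IsFiniteMeasure (μ j)] [IsFiniteMeasure ν]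
    (hweak : ∀ f : EuclideanSpace ℝ (Fin n) →ᵇ ℝ,
      Tendsto (fun j => ∫ x, f x ∂(μ j)) atTop (nhds (∫ x, f x ∂ν)))
    (s : ℝ) (hs : 0 < s) (sj : ℕ → ℝ) (hsj : ∀ j, 0 < sj j)
    (hsjs : Tendsto sj atTop (nhds s))
    (hfrost : ∀ (j : ℕ) (x : EuclideanSpace ℝ (Fin n)) (ρ : ℝ),
      (1 : ℝ) / (j + 1) ≤ ρ → closedBall x ρ ⊆ U →
      μ j (closedBall x ρ) ≤ ENNReal.ofReal (M * ρ ^ sj j)) :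
    ∀ (x : EuclideanSpace ℝ (Fin n)) (ρ : ℝ), 0 < ρ → closedBall x ρ ⊆ U →
      ν (closedBall x ρ) ≤ ENNReal.ofReal (M * ρ ^ s) := by
  intro x ρ hρ hsub
  obtain ⟨δ, hδ, hδU⟩ := (isCompact_closedBall x ρ).exists_cthickening_subset_open hU hsub
  rw [cthickening_closedBall hδ.le hρ.le] at hδU
  have key : ∀ ε : ℝ, 0 < ε → ε ≤ δ → ν.real (closedBall x ρ) ≤ M * (ρ + ε) ^ s := by
    intro ε hε hεδ
    have hsubε : closedBall x (ρ + ε) ⊆ U :=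
      (closedBall_subset_closedBall (by linarith)).trans hδU
    let g : EuclideanSpace ℝ (Fin n) → ℝ := fun y => max 0 (min 1 ((ρ + ε - dist y x) / ε))
    have hg0 : ∀ y, 0 ≤ g y := fun y => le_max_left _ _
    have hg1 : ∀ y, g y ≤ 1 := fun y => max_le zero_le_one (min_le_left _ _)
    have hgc : Continuous g := by
      simp only [g]
      fun_prop
    let f : EuclideanSpace ℝ (Fin n) →ᵇ ℝ := BoundedContinuousFunction.ofNormedAddCommGroup g hgc 1
      (fun y => by rw [Real.norm_of_nonneg (hg0 y)]; exact hg1 y)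
    have hfg : ∀ y, f y = g y := fun y => rfl
    have h1 : ν.real (closedBall x ρ) ≤ ∫ y, f y ∂ν := by
      rw [← integral_indicator_one isClosed_closedBall.measurableSet]
      refine integral_mono ((integrable_const (1 : ℝ)).indicator
        isClosed_closedBall.measurableSet) (f.integrable ν) ?_
      refine Set.indicator_le' ?_ (fun y _ => hg0 y)
      intro y hy
      have hy' : dist y x ≤ ρ := hy
      have : 1 ≤ (ρ + ε - dist y x) / ε := by
        rw [le_div_iff₀ hε]; linarith
      simp [hfg, g, this]
    have h2 : ∀ j, ∫ y, f y ∂(μ j) ≤ (μ j).real (closedBall x (ρ + ε)) := by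
      intro j
      rw [← integral_indicator_one isClosed_closedBall.measurableSet]
      refine integral_mono (f.integrable _) ((integrable_const (1 : ℝ)).indicator
        isClosed_closedBall.measurableSet) ?_
      intro y
      by_cases hy : y ∈ closedBall x (ρ + ε)
      · rw [Set.indicator_of_mem hy]
        exact hg1 y
      · have hy' : ρ + ε < dist y x := by simpa using hy
        have : (ρ + ε - dist y x) / ε ≤ 0 := div_nonpos_of_nonpos_of_nonneg (by linarith) hε.le
        rw [Set.indicator_of_notMem hy, hfg]
        exact max_le le_rfl ((min_le_right _ _).trans this)
    have h3 : Tendsto (fun j => M * (ρ + ε) ^ sj j) atTop (nhds (M * (ρ + ε) ^ s)) :=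
      (tendsto_const_nhds.rpow hsjs (Or.inl (by positivity))).const_mul M
    refine h1.trans (le_of_tendsto_of_tendsto (hweak f) h3 ?_)
    have h4 : ∀ᶠ j : ℕ in atTop, (1 : ℝ) / (j + 1) < ρ + ε :=
      (tendsto_one_div_add_atTop_nhds_zero_nat (𝕜 := ℝ)).eventually_lt_const (by positivity)
    filter_upwards [h4] with j hj
    exact (h2 j).trans (ENNReal.toReal_le_of_le_ofReal (by positivity)
      (hfrost j x _ hj.le hsubε))
  have hlim : Tendsto (fun ε : ℝ => M * (ρ + ε) ^ s) (nhdsWithin 0 (Set.Ioi 0))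
      (nhds (M * ρ ^ s)) := by
    have hc : ContinuousAt (fun ε : ℝ => M * (ρ + ε) ^ s) 0 :=
      continuousAt_const.mul ((continuousAt_const.add continuousAt_id).rpow_const
        (Or.inr hs.le))
    have := hc.tendsto.mono_left (nhdsWithin_le_nhds (s := Set.Ioi (0 : ℝ)))
    simpa using this
  have hfin : ν.real (closedBall x ρ) ≤ M * ρ ^ s := by
    refine ge_of_tendsto hlim ?_
    filter_upwards [Ioc_mem_nhdsGT hδ] with ε hε
    exact key ε hε.1 hε.2
  rw [← ofReal_measureReal]
  exact ENNReal.ofReal_le_ofReal hfin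
end

section
/- Let X be a measurable space, μ a finite measure on X with 0 < μ(X) ≤ Λ, f : X → [0,1] a measurable function, K ≥ 1, and let B_1, …, B_N ⊆ X be measurable sets with points c_j ∈ B_j such that f(x) ≤ K·f(c_j) for every x ∈ B_j and every j ∈ {1,…,N}. Let E ⊆ ⋃_{j=1}^N B_j be measurable and suppose ∫_E f dμ ≥ A for some A > 0. Then there exists j ∈ {1,…,N} such that μ(B_j) ≥ A/(2N) and f(c_j) ≥ A/(2KNΛ). -/
open MeasureTheory Filter
open scoped ENNReal

/-- a pigeonholing lemma: if `∫_E f dμ ≥ A` with `E ⊆ ⋃_{j=1}^N B_j`,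
`0 ≤ f ≤ 1`, and `f(x) ≤ K f(c_j)` on each `B_j`, then some `B_j` satisfies
`μ(B_j) ≥ A/(2N)` and `f(c_j) ≥ A/(2KNΛ)`. -/
theorem stmt15 {X : Type*} [MeasurableSpace X] (μ : Measure X) [IsFiniteMeasure μ]
    (Λ : ℝ) (hμ0 : 0 < μ Set.univ) (hμΛ : μ Set.univ ≤ ENNReal.ofReal Λ)
    (f : X → ℝ) (hf : Measurable f) (hf0 : ∀ x, 0 ≤ f x) (hf1 : ∀ x, f x ≤ 1)
    (K : ℝ) (hK : 1 ≤ K) (N : ℕ)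
    (B : Fin N → Set X) (hB : ∀ j, MeasurableSet (B j))
    (c : Fin N → X) (hc : ∀ j, c j ∈ B j)
    (hcomp : ∀ j, ∀ x ∈ B j, f x ≤ K * f (c j))
    (E : Set X) (hE : MeasurableSet E) (hEsub : E ⊆ ⋃ j, B j)
    (A : ℝ) (hA : 0 < A) (hint : A ≤ ∫ x in E, f x ∂μ) :
    ∃ j : Fin N, A / (2 * N) ≤ (μ (B j)).toReal ∧ A / (2 * K * N * Λ) ≤ f (c j) := by
  have hfi : Integrable f μ := by
    refine Integrable.of_bound hf.aestronglyMeasurable 1 (ae_of_all _ fun x => ?_)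
    rw [Real.norm_eq_abs, abs_of_nonneg (hf0 x)]
    exact hf1 x
  have hsum : ∫ x in E, f x ∂μ ≤ ∑ j, ∫ x in B j, f x ∂μ := by
    have h1 : ∑ j, ∫ x in B j, f x ∂μ = ∫ x, ∑ j, (B j).indicator f x ∂μ := by
      rw [integral_finsetSum _ (fun j _ => hfi.indicator (hB j))]
      exact Finset.sum_congr rfl fun j _ => (integral_indicator (hB j)).symm
    rw [h1, ← integral_indicator hE]
    refine integral_mono (hfi.indicator hE)
      (integrable_finsetSum _ (fun j _ => hfi.indicator (hB j))) (fun x => ?_)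
    have hnn : ∀ j ∈ Finset.univ, 0 ≤ (B j).indicator f x :=
      fun j _ => Set.indicator_nonneg (fun y _ => hf0 y) x
    by_cases hx : x ∈ E
    · obtain ⟨j, hj⟩ := Set.mem_iUnion.1 (hEsub hx)
      have h2 := Finset.single_le_sum hnn (Finset.mem_univ j)
      rw [Set.indicator_of_mem hj] at h2
      simpa only [Set.indicator_of_mem hx] using h2
    · simpa only [Set.indicator_of_notMem hx] using Finset.sum_nonneg hnn
  have hN : 0 < N := by
    rcases Nat.eq_zero_or_pos N with h | h
    · subst h
      simp only [Finset.univ_eq_empty, Finset.sum_empty] at hsum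
      linarith
    · exact h
  have hNR : (0 : ℝ) < N := by exact_mod_cast hN
  have hΛ : 0 < Λ := ENNReal.ofReal_pos.1 (hμ0.trans_le hμΛ)
  obtain ⟨j, hj⟩ : ∃ j : Fin N, A / N ≤ ∫ x in B j, f x ∂μ := by
    by_contra! hcon
    have h3 : ∑ j, ∫ x in B j, f x ∂μ < ∑ _j : Fin N, A / N :=
      Finset.sum_lt_sum_of_nonempty ⟨⟨0, hN⟩, Finset.mem_univ _⟩ fun j _ => hcon j
    rw [Finset.sum_const, Finset.card_univ, Fintype.card_fin, nsmul_eq_mul,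
      mul_div_cancel₀ _ hNR.ne'] at h3
    linarith
  have hbound : ∀ C : ℝ, (∀ x ∈ B j, f x ≤ C) → ∫ x in B j, f x ∂μ ≤ C * (μ (B j)).toReal := by
    intro C hC
    have h4 := setIntegral_mono_on (μ := μ) hfi.integrableOn
      (integrableOn_const (C := C) (measure_ne_top μ (B j))) (hB j) hC
    rw [setIntegral_const, smul_eq_mul, mul_comm] at h4
    exact h4
  have hb1 := hbound 1 fun x _ => hf1 x
  have hb2 := hbound _ (hcomp j)
  have hm : (μ (B j)).toReal ≤ Λ :=
    ENNReal.toReal_le_of_le_ofReal hΛ.le ((measure_mono (Set.subset_univ _)).trans hμΛ)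
  have hAN : 0 < A / N := div_pos hA hNR
  refine ⟨j, ?_, ?_⟩
  · have : A / (2 * N) = A / N / 2 := by field_simp
    rw [this]
    linarith
  · have hK0 : 0 < K := by linarith
    have hKf : 0 ≤ K * f (c j) := mul_nonneg hK0.le (hf0 _)
    have h5 : A / N ≤ K * f (c j) * Λ := by nlinarith [mul_le_mul_of_nonneg_left hm hKf]
    have h6 : A / (2 * K * N * Λ) = A / N / 2 / (K * Λ) := by field_simp
    rw [h6, div_le_iff₀ (mul_pos hK0 hΛ)]
    linarith
end
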